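/- arXiv:2004.05330 — 2 statements merged into one kernel-verified Lean document; each statement's English description precedes it below -/
import Mathlib

section
/- There exist at least 10 pairwise inequivalent s-extremal singly even self-dual [62,31,12] codes; that is, there exist at least 10 pairwise inequivalent singly even self-dual codes of length 62 with minimum weight 12 whose shadows have minimum weight 11. -/
open Finset

/-- Hamming weight of a binary vector. -/
def wt {n : ℕ} (x : Fin n → ZMod 2) : ℕ := hammingNorm x

/-- The dual of a set of binary vectors with respect to the standard inner product. -/
def dualSet {n : ℕ} (C : Set (Fin n → ZMod 2)) : Set (Fin n → ZMod 2) :=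
  {x | ∀ y ∈ C, ∑ i, x i * y i = 0}

/-- A binary linear code is self-dual if it equals its dual code. -/
def IsSelfDual {n : ℕ} (C : Submodule (ZMod 2) (Fin n → ZMod 2)) : Prop :=
  (C : Set (Fin n → ZMod 2)) = dualSet (C : Set (Fin n → ZMod 2))

/-- A self-dual code is singly even if some codeword has weight not divisible by 4. -/
def IsSinglyEvenSelfDual {n : ℕ} (C : Submodule (ZMod 2) (Fin n → ZMod 2)) : Prop :=
  IsSelfDual C ∧ ∃ x ∈ C, ¬ (4 ∣ wt x)

/-- The doubly even subcode `C₀` of `C` (as a set): codewords of weight ≡ 0 (mod 4). -/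
def evenSub {n : ℕ} (C : Submodule (ZMod 2) (Fin n → ZMod 2)) : Set (Fin n → ZMod 2) :=
  {x | x ∈ C ∧ 4 ∣ wt x}

/-- The shadow `S = C₀^⊥ \ C` of a singly even self-dual code. -/
def shadow {n : ℕ} (C : Submodule (ZMod 2) (Fin n → ZMod 2)) : Set (Fin n → ZMod 2) :=
  dualSet (evenSub C) \ (C : Set (Fin n → ZMod 2))

/-- The minimum (nonzero) weight of a set of vectors. -/
noncomputable def minWtSet {n : ℕ} (S : Set (Fin n → ZMod 2)) : ℕ :=
  sInf {w | ∃ x ∈ S, x ≠ 0 ∧ wt x = w}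

/-- The minimum weight of a code. -/
noncomputable def minWt {n : ℕ} (C : Submodule (ZMod 2) (Fin n → ZMod 2)) : ℕ :=
  minWtSet (C : Set (Fin n → ZMod 2))

/-- A singly even self-dual code of length `n` is s-extremal if
`d(S) = n/2 + 4 - 2 d(C)`. -/
def IsSExtremal {n : ℕ} (C : Submodule (ZMod 2) (Fin n → ZMod 2)) : Prop :=
  IsSinglyEvenSelfDual C ∧
    (minWtSet (shadow C) : ℤ) = ((n / 2 : ℕ) : ℤ) + 4 - 2 * (minWt C : ℤ)

/-- Two codes are equivalent if one is obtained from the other by permuting coordinates. -/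
def CodeEquiv {n : ℕ} (C D : Submodule (ZMod 2) (Fin n → ZMod 2)) : Prop :=
  ∃ σ : Equiv.Perm (Fin n),
    Submodule.map (LinearMap.funLeft (ZMod 2) (ZMod 2) σ) C = D

/-- The neighbor `C₀ ∪ (t + C₀)` of `C` obtained from a shadow vector `t`:
the span of the doubly even subcode together with `t`. -/
def neighborCode {n : ℕ} (C : Submodule (ZMod 2) (Fin n → ZMod 2))
    (t : Fin n → ZMod 2) : Submodule (ZMod 2) (Fin n → ZMod 2) :=
  Submodule.span (ZMod 2) (evenSub C ∪ {t})

/-- All sums (bitwise xor) of `v` with at most `k` of the rows in the list. -/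
def combos : List ℕ → ℕ → ℕ → List ℕ
  | [], _, v => [v]
  | _ :: _, 0, v => [v]
  | r :: rs, k + 1, v => combos rs (k + 1) v ++ combos rs k (Nat.xor v r)

def lenStep : ℕ → List ℕ → List ℕ
  | _, [] => []
  | p, l :: ls => Nat.add l p :: lenStep l ls

/-- Lengths of `combos rs k` for `k = 1, …, 5`. -/
def lensOf : List ℕ → List ℕ
  | [] => [1, 1, 1, 1, 1]
  | _ :: rs => lenStep 1 (lensOf rs)

def ones (n : ℕ) : ℕ := Nat.sub (Nat.pow 2 n) 1

def tb (m i : ℕ) : Bool := Nat.beq (Nat.land (Nat.shiftRight m i) 1) 1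

def colStep (a : Bool) : ℕ → ℕ → List ℕ → List ℕ → List ℕ
  | pl, pc, l :: ls, c :: cs =>
    Nat.lor c (Nat.shiftLeft (bif a then Nat.xor pc (ones pl) else pc) l) :: colStep a l c ls cs
  | _, _, [], _ => []
  | _, _, _ :: _, [] => []

/-- Bit-sliced columns: entry `k - 1` holds, as a bit vector, the `j`-th bits of the
members of `combos rs k 0`. -/
def colState (j : ℕ) : List ℕ → List ℕ
  | [] => [0, 0, 0, 0, 0]
  | r :: rs => colStep (tb r j) 1 0 (lensOf rs) (colState j rs)

def tot (rs : List ℕ) : ℕ := (lensOf rs).getD 4 0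

def col (rs : List ℕ) (j : ℕ) : ℕ := (colState j rs).getD 4 0

def geStep (c : ℕ) : ℕ → List ℕ → List ℕ
  | _, [] => []
  | q, p :: ps => Nat.lor p (Nat.land q c) :: geStep c p ps

/-- Bit-sliced unary weight counters of the members of `combos rs 5 s`. -/
def geTo (rs : List ℕ) (s : ℕ) : ℕ → List ℕ
  | 0 => [0, 0, 0, 0, 0, 0, 0, 0, 0, 0, 0, 0]
  | n + 1 => geStep (bif tb s n then Nat.xor (col rs n) (ones (tot rs)) else col rs n)
      (ones (tot rs)) (geTo rs s n)

def chkC (rs : List ℕ) : Bool :=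
  Nat.beq (Nat.lor ((geTo rs 0 62).getD 11 0) 1) (ones (tot rs))

def chkS (rs : List ℕ) (s : ℕ) : Bool :=
  Nat.beq ((geTo rs s 62).getD 10 0) (ones (tot rs))

/-- Members of `combos rs k v` selected by the bit mask `E`, put in front of `acc`. -/
noncomputable def ext (rs : List ℕ) : ℕ → ℕ → ℕ → List ℕ → List ℕ :=
  List.rec (motive := fun _ => ℕ → ℕ → ℕ → List ℕ → List ℕ)
    (fun _ v E acc => Bool.rec (v :: acc) acc (Nat.beq E 0))
    (fun r rs ih k v E acc =>
      Bool.rec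
        (Nat.rec (motive := fun _ => List ℕ) (v :: acc)
          (fun k _ => ih (Nat.succ k) v (Nat.mod E (Nat.pow 2 ((lensOf rs).getD k 0)))
            (ih k (Nat.xor v r) (Nat.shiftRight E ((lensOf rs).getD k 0)) acc)) k)
        acc (Nat.beq E 0)) rs

/-- Spread the lowest `n` bits of a number to digits in base `2 ^ w`. -/
def sp (w : ℕ) : ℕ → ℕ → ℕ
  | 0, _ => 0
  | n + 1, m => Nat.add (Nat.mul (Nat.pow 2 w) (sp w n (Nat.div m 2))) (Nat.mod m 2)

/-- The shadow vectors of weight 11 among `combos rs 5 s`, with bits spread by `w`. -/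
noncomputable def Lside (w : ℕ) (rs : List ℕ) (s : ℕ) (acc : List ℕ) : List ℕ :=
  ext (rs.map (sp w 62)) 5 (sp w 62 s)
    (Nat.xor ((geTo rs s 62).getD 11 0) (ones (tot rs))) acc

noncomputable def dot (L : List ℕ) : List ℕ → ℕ :=
  List.rec (motive := fun _ => List ℕ → ℕ) (fun _ => 0)
    (fun x _ ih M => List.rec (motive := fun _ => ℕ) 0
      (fun y M _ => Nat.add (Nat.mul x y) (ih M)) M) L

/-- Sum of the squares of the lowest `n` digits in base `2 ^ 16`. -/
noncomputable def sqDigits (n : ℕ) : ℕ → ℕ :=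
  Nat.rec (motive := fun _ => ℕ → ℕ) (fun _ => 0) (fun _ ih m =>
    Nat.add (Nat.pow (Nat.mod m 65536) 2) (ih (Nat.div m 65536))) n

/-- Sum of `sqDigits 62` over the lowest `n` digits in base `2 ^ 992`. -/
noncomputable def sqOuter (n : ℕ) : ℕ → ℕ :=
  Nat.rec (motive := fun _ => ℕ → ℕ) (fun _ => 0) (fun _ ih m =>
    Nat.add (sqDigits 62 (Nat.mod m (Nat.pow 2 992))) (ih (Nat.div m (Nat.pow 2 992)))) n

/-- Data describing a self-dual code of length 62. -/
structure CData where
  /-- generator matrix `[I | A]` -/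
  g : List ℕ
  /-- generator matrix `[Aᵀ | I]` -/
  h : List ℕ
  /-- shadow vector vanishing on the left half -/
  sL : ℕ
  /-- shadow vector vanishing on the right half -/
  sR : ℕ
  /-- codeword of weight 12 -/
  c12 : ℕ
  /-- shadow vector of weight 11 -/
  s11 : ℕ
  /-- invariant -/
  J : ℕ


noncomputable def Lall (d : CData) (w : ℕ) : List ℕ := Lside w d.g d.sL (Lside w d.h d.sR [])

noncomputable def chkJ (d : CData) : Bool :=
  Bool.and (Nat.ble (Lall d 16).length 65535)
    (Nat.beq (sqOuter 62 (dot (Lall d 16) (Lall d 992))) d.J)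

/-! ### Correctness of the bit-sliced enumeration -/

theorem tb_eq (m i : ℕ) : tb m i = m.testBit i := by
  rw [Bool.eq_iff_iff, tb, Nat.beq_eq]
  change ((m >>> i) &&& 1 = 1) ↔ _
  rw [Nat.testBit, Nat.and_comm, Nat.one_and_eq_mod_two]
  rcases Nat.mod_two_eq_zero_or_one (m >>> i) with h | h <;> simp [h]

theorem ones_eq (n : ℕ) : ones n = 2 ^ n - 1 := rfl

/-- `M`, read as a bit vector, lists the values of `p` on the members of `l`. -/
def IsMask (M : ℕ) (l : List ℕ) (p : ℕ → Bool) : Prop :=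
  ∀ t, M.testBit t = (l[t]?).any p

theorem IsMask.append {M₁ M₂ n : ℕ} {l₁ l₂ : List ℕ} {p : ℕ → Bool}
    (h₁ : IsMask M₁ l₁ p) (h₂ : IsMask M₂ l₂ p) (hn : n = l₁.length) :
    IsMask (Nat.lor M₁ (Nat.shiftLeft M₂ n)) (l₁ ++ l₂) p := by
  intro t
  change (M₁ ||| (M₂ <<< n)).testBit t = _
  rw [Nat.testBit_or, Nat.testBit_shiftLeft, h₁ t, List.getElem?_append]
  subst hn
  by_cases h : t < l₁.length
  · simp [h]
  · have h' : l₁.length ≤ t := not_lt.mp h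
    simp [h, h', h₂ _]

theorem isMask_ones (l : List ℕ) {n : ℕ} (hn : n = l.length) :
    IsMask (ones n) l (fun _ => true) := by
  intro t
  rw [ones_eq, Nat.testBit_two_pow_sub_one, hn]
  by_cases h : t < l.length <;> simp [h]

theorem IsMask.xor {M₁ M₂ : ℕ} {l : List ℕ} {p q : ℕ → Bool}
    (h₁ : IsMask M₁ l p) (h₂ : IsMask M₂ l q) :
    IsMask (Nat.xor M₁ M₂) l (fun x => Bool.xor (p x) (q x)) := by
  intro t
  change (M₁ ^^^ M₂).testBit t = _
  rw [Nat.testBit_xor, h₁ t, h₂ t]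
  cases l[t]? <;> simp

theorem IsMask.or {M₁ M₂ : ℕ} {l : List ℕ} {p q : ℕ → Bool}
    (h₁ : IsMask M₁ l p) (h₂ : IsMask M₂ l q) :
    IsMask (Nat.lor M₁ M₂) l (fun x => (p x) || (q x)) := by
  intro t
  change (M₁ ||| M₂).testBit t = _
  rw [Nat.testBit_or, h₁ t, h₂ t]
  cases l[t]? <;> simp

theorem IsMask.and {M₁ M₂ : ℕ} {l : List ℕ} {p q : ℕ → Bool}
    (h₁ : IsMask M₁ l p) (h₂ : IsMask M₂ l q) :
    IsMask (Nat.land M₁ M₂) l (fun x => (p x) && (q x)) := by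
  intro t
  change (M₁ &&& M₂).testBit t = _
  rw [Nat.testBit_and, h₁ t, h₂ t]
  cases l[t]? <;> simp

theorem IsMask.map {M : ℕ} {l : List ℕ} {p : ℕ → Bool} {f : ℕ → ℕ}
    (h : IsMask M l (fun x => p (f x))) : IsMask M (l.map f) p := by
  intro t
  rw [h t, List.getElem?_map]
  cases l[t]? <;> simp

theorem IsMask.congr {M : ℕ} {l : List ℕ} {p q : ℕ → Bool}
    (h : IsMask M l p) (hpq : ∀ x, p x = q x) : IsMask M l q := by
  have : p = q := funext hpq
  exact this ▸ h

theorem isMask_zero (l : List ℕ) {p : ℕ → Bool} (hp : ∀ x ∈ l, p x = false) :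
    IsMask 0 l p := by
  intro t
  rw [Nat.zero_testBit]
  rcases h : l[t]? with _ | a
  · simp
  · simp [hp a (List.mem_of_getElem? h)]

theorem IsMask.all {n : ℕ} {l : List ℕ} {p : ℕ → Bool} (h : IsMask (ones n) l p)
    (hn : n = l.length) : ∀ x ∈ l, p x = true := by
  intro x hx
  obtain ⟨t, ht, rfl⟩ := List.getElem_of_mem hx
  have := h t
  rw [ones_eq, Nat.testBit_two_pow_sub_one, hn] at this
  simpa [ht] using this.symm

theorem combos_shift (rs : List ℕ) (k v w : ℕ) :
    combos rs k (Nat.xor v w) = (combos rs k v).map (fun x => Nat.xor x w) := by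
  induction rs generalizing k v with
  | nil => simp [combos]
  | cons r rs ih =>
    cases k with
    | zero => simp [combos]
    | succ k =>
      have e : Nat.xor (Nat.xor v w) r = Nat.xor (Nat.xor v r) w := by
        change (v ^^^ w) ^^^ r = (v ^^^ r) ^^^ w
        rw [Nat.xor_assoc, Nat.xor_comm w r, Nat.xor_assoc]
      simp only [combos, List.map_append]
      rw [ih, e, ih k (Nat.xor v r)]

theorem combos_zero (rs : List ℕ) (v : ℕ) : combos rs 0 v = [v] := by
  cases rs <;> rfl

/-- Number of combinations. -/
def clen (rs : List ℕ) (k : ℕ) : ℕ := (combos rs k 0).length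

theorem length_combos (rs : List ℕ) (k v : ℕ) : (combos rs k v).length = clen rs k := by
  have := combos_shift rs k 0 v
  have h0 : Nat.xor 0 v = v := Nat.zero_xor v
  rw [h0] at this
  rw [this, List.length_map, clen]

theorem clen_cons (r : ℕ) (rs : List ℕ) (k : ℕ) :
    clen (r :: rs) (k + 1) = clen rs (k + 1) + clen rs k := by
  rw [clen]
  simp only [combos, List.length_append, length_combos]

theorem clen_zero (rs : List ℕ) : clen rs 0 = 1 := by
  rw [clen, combos_zero]; rfl

def LensOK (rs : List ℕ) : ℕ → List ℕ → Prop
  | _, [] => True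
  | k, l :: ls => l = clen rs k ∧ LensOK rs (k + 1) ls

theorem lensOK_step (r : ℕ) (rs : List ℕ) (k p : ℕ) (ls : List ℕ) (hp : p = clen rs k)
    (h : LensOK rs (k + 1) ls) : LensOK (r :: rs) (k + 1) (lenStep p ls) := by
  induction ls generalizing k p with
  | nil => trivial
  | cons l ls ih =>
    refine ⟨?_, ih _ _ h.1 h.2⟩
    rw [clen_cons, h.1, hp]; rfl

theorem lensOK_lensOf (rs : List ℕ) : LensOK rs 1 (lensOf rs) := by
  induction rs with
  | nil => simp [lensOf, LensOK, clen, combos]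
  | cons r rs ih => exact lensOK_step r rs 0 1 _ (clen_zero rs).symm ih

theorem length_lenStep (p : ℕ) (ls : List ℕ) : (lenStep p ls).length = ls.length := by
  induction ls generalizing p with
  | nil => rfl
  | cons l ls ih => simp [lenStep, ih]

theorem length_lensOf (rs : List ℕ) : (lensOf rs).length = 5 := by
  induction rs with
  | nil => rfl
  | cons r rs ih => rw [lensOf, length_lenStep, ih]

theorem LensOK.getD {rs : List ℕ} {k : ℕ} {ls : List ℕ} (h : LensOK rs k ls) (i : ℕ)
    (hi : i < ls.length) : ls.getD i 0 = clen rs (k + i) := by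
  induction ls generalizing k i with
  | nil => simp at hi
  | cons l ls ih =>
    cases i with
    | zero => simpa using h.1
    | succ i =>
      have := ih h.2 i (by simpa using hi)
      rw [List.getD_cons_succ, this]; congr 1; ring

theorem lensOf_getD (rs : List ℕ) (i : ℕ) (hi : i < 5) :
    (lensOf rs).getD i 0 = clen rs (i + 1) := by
  rw [(lensOK_lensOf rs).getD i (by rw [length_lensOf]; exact hi), add_comm]

theorem tot_eq (rs : List ℕ) (v : ℕ) : tot rs = (combos rs 5 v).length := by
  rw [tot, lensOf_getD rs 4 (by norm_num), length_combos]

def ColOK (rs : List ℕ) (j : ℕ) : ℕ → List ℕ → Prop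
  | _, [] => True
  | k, c :: cs => IsMask c (combos rs k 0) (fun x => x.testBit j) ∧ ColOK rs j (k + 1) cs

theorem colOK_step (r : ℕ) (rs : List ℕ) (j k pl pc : ℕ) (ls cs : List ℕ) (hp : pl = clen rs k)
    (hpc : IsMask pc (combos rs k 0) (fun x => x.testBit j))
    (hl : LensOK rs (k + 1) ls) (h : ColOK rs j (k + 1) cs) :
    ColOK (r :: rs) j (k + 1) (colStep (tb r j) pl pc ls cs) := by
  induction ls generalizing k pl pc cs with
  | nil => simp [colStep, ColOK]
  | cons l ls ih =>
    cases cs with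
    | nil => simp [colStep, ColOK]
    | cons c cs =>
      refine ⟨?_, ih _ _ _ _ hl.1 h.1 hl.2 h.2⟩
      simp only [combos]
      refine h.1.append ?_ hl.1
      rw [combos_shift]
      apply IsMask.map
      rw [tb_eq]
      have hx : ∀ x : ℕ, (Nat.xor x r).testBit j = Bool.xor (x.testBit j) (r.testBit j) :=
        fun x => Nat.testBit_xor ..
      cases hr : r.testBit j
      · refine hpc.congr fun x => ?_
        rw [hx, hr, Bool.xor_false]
      · refine (hpc.xor (isMask_ones _ (n := pl) (by rw [hp, clen]))).congr fun x => ?_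
        rw [hx, hr]

theorem colOK_colState (j : ℕ) (rs : List ℕ) : ColOK rs j 1 (colState j rs) := by
  induction rs with
  | nil =>
    have h : ∀ k, IsMask 0 (combos [] k 0) (fun x => x.testBit j) := fun k =>
      isMask_zero _ (by simp [combos])
    exact ⟨h _, h _, h _, h _, h _, trivial⟩
  | cons r rs ih =>
    refine colOK_step r rs j 0 1 0 _ _ (clen_zero rs).symm ?_ (lensOK_lensOf rs) ih
    exact isMask_zero _ (by simp [combos_zero])

theorem length_colStep (a : Bool) (pl pc : ℕ) (ls cs : List ℕ) (h : ls.length = cs.length) :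
    (colStep a pl pc ls cs).length = cs.length := by
  induction ls generalizing pl pc cs with
  | nil => cases cs <;> simp_all [colStep]
  | cons l ls ih =>
    cases cs with
    | nil => simp at h
    | cons c cs => simp only [colStep, List.length_cons]; rw [ih]; simpa using h

theorem length_colState (j : ℕ) (rs : List ℕ) : (colState j rs).length = 5 := by
  induction rs with
  | nil => rfl
  | cons r rs ih => rw [colState, length_colStep _ _ _ _ _ (by rw [length_lensOf, ih]), ih]

theorem ColOK.getD {rs : List ℕ} {j k : ℕ} {cs : List ℕ} (h : ColOK rs j k cs) (i : ℕ)
    (hi : i < cs.length) : IsMask (cs.getD i 0) (combos rs (k + i) 0) (fun x => x.testBit j) := by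
  induction cs generalizing k i with
  | nil => simp at hi
  | cons c cs ih =>
    cases i with
    | zero => simpa using h.1
    | succ i =>
      have := ih h.2 i (by simpa using hi)
      rw [List.getD_cons_succ]
      have e : k + (i + 1) = k + 1 + i := by ring
      rw [e]; exact this

theorem isMask_col (rs : List ℕ) (j : ℕ) :
    IsMask (col rs j) (combos rs 5 0) (fun x => x.testBit j) :=
  (colOK_colState j rs).getD 4 (by rw [length_colState]; norm_num)

theorem combos_eq_map (rs : List ℕ) (k s : ℕ) :
    combos rs k s = (combos rs k 0).map (fun x => Nat.xor x s) := by
  have := combos_shift rs k 0 s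
  have h0 : Nat.xor 0 s = s := Nat.zero_xor s
  rwa [h0] at this

theorem isMask_colS (rs : List ℕ) (s j : ℕ) :
    IsMask (bif tb s j then Nat.xor (col rs j) (ones (tot rs)) else col rs j)
      (combos rs 5 s) (fun x => x.testBit j) := by
  rw [combos_eq_map]
  apply IsMask.map
  rw [tb_eq]
  have hx : ∀ x : ℕ, (Nat.xor x s).testBit j = Bool.xor (x.testBit j) (s.testBit j) :=
    fun x => Nat.testBit_xor ..
  cases hr : s.testBit j
  · refine (isMask_col rs j).congr fun x => ?_
    rw [hx, hr, Bool.xor_false]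
  · refine ((isMask_col rs j).xor (isMask_ones _ (tot_eq rs 0))).congr fun x => ?_
    rw [hx, hr]

/-- Number of ones among the lowest `n` bits. -/
def pop (n m : ℕ) : ℕ := ∑ i ∈ Finset.range n, (m.testBit i).toNat

def GeOK (l : List ℕ) (f : ℕ → ℕ) : ℕ → List ℕ → Prop
  | _, [] => True
  | m, p :: ps => IsMask p l (fun x => decide (m ≤ f x)) ∧ GeOK l f (m + 1) ps

theorem geOK_step (l : List ℕ) (f f' : ℕ → ℕ) (b : ℕ → Bool) (c m q : ℕ) (ps : List ℕ)
    (hf : ∀ x, f' x = f x + (b x).toNat) (hc : IsMask c l b)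
    (hq : IsMask q l (fun x => decide (m ≤ f x))) (h : GeOK l f (m + 1) ps) :
    GeOK l f' (m + 1) (geStep c q ps) := by
  induction ps generalizing m q with
  | nil => trivial
  | cons p ps ih =>
    refine ⟨?_, ih _ _ h.1 h.2⟩
    refine (h.1.or (hq.and hc)).congr fun x => ?_
    rw [hf]
    cases b x
    · simp
    · simp only [Bool.and_true, Bool.toNat_true]
      rw [Bool.eq_iff_iff]
      simp only [Bool.or_eq_true, decide_eq_true_eq]
      omega

theorem geOK_geTo (rs : List ℕ) (s n : ℕ) : GeOK (combos rs 5 s) (pop n) 1 (geTo rs s n) := by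
  induction n with
  | zero =>
    have h : ∀ m, IsMask 0 (combos rs 5 s) (fun x => decide (m + 1 ≤ pop 0 x)) := fun m =>
      isMask_zero _ (by simp [pop])
    exact ⟨h _, h _, h _, h _, h _, h _, h _, h _, h _, h _, h _, h _, trivial⟩
  | succ n ih =>
    refine geOK_step _ (pop n) _ (fun x => x.testBit n) _ 0 _ _ ?_ (isMask_colS rs s n) ?_ ih
    · intro x; rw [pop, Finset.sum_range_succ, pop]
    · exact (isMask_ones _ (tot_eq rs s)).congr fun x => by simp

theorem GeOK.getD {l : List ℕ} {f : ℕ → ℕ} {m : ℕ} {ps : List ℕ} (h : GeOK l f m ps) (i : ℕ)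
    (hi : i < ps.length) : IsMask (ps.getD i 0) l (fun x => decide (m + i ≤ f x)) := by
  induction ps generalizing m i with
  | nil => simp at hi
  | cons c cs ih =>
    cases i with
    | zero => simpa using h.1
    | succ i =>
      have := ih h.2 i (by simpa using hi)
      rw [List.getD_cons_succ]
      have e : m + (i + 1) = m + 1 + i := by ring
      rw [e]; exact this

theorem length_geStep (c q : ℕ) (ps : List ℕ) : (geStep c q ps).length = ps.length := by
  induction ps generalizing q with
  | nil => rfl
  | cons l ls ih => simp [geStep, ih]

theorem length_geTo (rs : List ℕ) (s n : ℕ) : (geTo rs s n).length = 12 := by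
  induction n with
  | zero => rfl
  | succ n ih => rw [geTo, length_geStep, ih]

theorem combos_head (rs : List ℕ) (k v : ℕ) : (combos rs k v)[0]? = some v := by
  induction rs generalizing k with
  | nil => rfl
  | cons r rs ih =>
    cases k with
    | zero => rfl
    | succ k => simp [combos, List.getElem?_append, ih, length_combos]; intro h; 
                have := ih (k+1); rw [List.getElem?_eq_none] at this; simp at this; rw [length_combos, h]

theorem of_chkC_aux {rs : List ℕ} (n : ℕ)
    (h1 : Nat.lor ((geTo rs 0 n).getD 11 0) 1 = ones (tot rs)) :
    ∀ x ∈ combos rs 5 0, x = 0 ∨ 12 ≤ pop n x := by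
  have h2 := (geOK_geTo rs 0 n).getD 11 (by rw [length_geTo]; norm_num)
  generalize (geTo rs 0 n).getD 11 0 = G at h1 h2
  intro x hx
  obtain ⟨t, ht, rfl⟩ := List.getElem_of_mem hx
  by_cases h0 : t = 0
  · left
    subst h0
    have := combos_head rs 5 0
    rw [List.getElem?_eq_getElem ht] at this
    exact Option.some.inj this
  · right
    have h3 := h2 t
    have h4 : (G ||| 1).testBit t = (ones (tot rs)).testBit t :=
      congrArg (fun z => Nat.testBit z t) h1
    have h5 : (1 : ℕ).testBit t = false := by
      rw [Nat.testBit_one_eq_true_iff_self_eq_zero.not.mpr h0 |> Bool.eq_false_iff.mpr]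
    rw [Nat.testBit_or, h5, Bool.or_false, h3, ones_eq, Nat.testBit_two_pow_sub_one,
      tot_eq rs 0] at h4
    simpa [ht] using h4

theorem of_chkC {rs : List ℕ} (h : chkC rs = true) :
    ∀ x ∈ combos rs 5 0, x = 0 ∨ 12 ≤ pop 62 x := by
  rw [chkC, Nat.beq_eq] at h
  exact of_chkC_aux 62 h

theorem of_chkS_aux {rs : List ℕ} {s : ℕ} (n : ℕ)
    (h1 : (geTo rs s n).getD 10 0 = ones (tot rs)) :
    ∀ x ∈ combos rs 5 s, 11 ≤ pop n x := by
  have h2 := (geOK_geTo rs s n).getD 10 (by rw [length_geTo]; norm_num)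
  rw [h1] at h2
  intro x hx
  simpa using h2.all (tot_eq rs s) x hx

theorem of_chkS {rs : List ℕ} {s : ℕ} (h : chkS rs s = true) :
    ∀ x ∈ combos rs 5 s, 11 ≤ pop 62 x := by
  rw [chkS, Nat.beq_eq] at h
  exact of_chkS_aux 62 h

theorem isMask_E (rs : List ℕ) (s n : ℕ) :
    IsMask (Nat.xor ((geTo rs s n).getD 11 0) (ones (tot rs))) (combos rs 5 s)
      (fun x => decide (pop n x < 12)) := by
  refine (((geOK_geTo rs s n).getD 11 (by rw [length_geTo]; norm_num)).xor
    (isMask_ones _ (tot_eq rs s))).congr fun x => ?_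
  rw [Bool.xor_true, Bool.eq_iff_iff]
  simp

theorem isMask_append_left {E : ℕ} {l₁ l₂ : List ℕ} {p : ℕ → Bool} (h : IsMask E (l₁ ++ l₂) p)
    {n : ℕ} (hn : n = l₁.length) : IsMask (Nat.mod E (Nat.pow 2 n)) l₁ p := by
  intro t
  change (E % 2 ^ n).testBit t = _
  rw [Nat.testBit_mod_two_pow, h t, hn, List.getElem?_append]
  by_cases ht : t < l₁.length <;> simp [ht]

theorem isMask_append_right {E : ℕ} {l₁ l₂ : List ℕ} {p : ℕ → Bool} (h : IsMask E (l₁ ++ l₂) p)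
    {n : ℕ} (hn : n = l₁.length) : IsMask (Nat.shiftRight E n) l₂ p := by
  intro t
  change (E >>> n).testBit t = _
  rw [Nat.testBit_shiftRight, h _, hn, List.getElem?_append]
  simp

theorem isMask_zero_filter {l : List ℕ} {p : ℕ → Bool} (h : IsMask 0 l p) : l.filter p = [] := by
  rw [List.filter_eq_nil_iff]
  intro x hx
  obtain ⟨t, ht, rfl⟩ := List.getElem_of_mem hx
  have := h t
  simpa [ht] using this.symm

theorem isMask_single {E v : ℕ} {p : ℕ → Bool} (h : IsMask E [v] p) (hE : E ≠ 0) :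
    [v].filter p = [v] := by
  obtain ⟨t, ht⟩ := Nat.exists_testBit_of_ne_zero hE
  rw [h t] at ht
  cases t with
  | zero => simpa using ht
  | succ t => simp at ht

theorem ext_eq (f : ℕ → ℕ) (hf : ∀ a b, f (Nat.xor a b) = Nat.xor (f a) (f b)) (rs : List ℕ)
    (k v E : ℕ) (acc : List ℕ) (p : ℕ → Bool) (hk : k ≤ 5) (h : IsMask E (combos rs k v) p) :
    ext (rs.map f) k (f v) E acc = ((combos rs k v).filter p).map f ++ acc := by
  induction rs generalizing k v E acc with
  | nil =>
    change (Bool.rec (f v :: acc) acc (Nat.beq E 0) : List ℕ) = _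
    by_cases hE : E = 0
    · subst hE; rw [isMask_zero_filter h]; rfl
    · have hb : Nat.beq E 0 = false := by
        rw [← Bool.not_eq_true]; exact fun hh => hE (Nat.eq_of_beq_eq_true hh)
      rw [hb, combos, isMask_single h hE]; rfl
  | cons r rs ih =>
    by_cases hE : E = 0
    · subst hE; rw [isMask_zero_filter h]; rfl
    · have hb : Nat.beq E 0 = false := by
        rw [← Bool.not_eq_true]; exact fun hh => hE (Nat.eq_of_beq_eq_true hh)
      cases k with
      | zero =>
        change (Bool.rec (f v :: acc) acc (Nat.beq E 0) : List ℕ) = _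
        rw [hb, combos, isMask_single h hE]; rfl
      | succ k =>
        change (Bool.rec (ext (rs.map f) (k + 1) (f v)
          (Nat.mod E (Nat.pow 2 ((lensOf (rs.map f)).getD k 0)))
          (ext (rs.map f) k (Nat.xor (f v) (f r))
            (Nat.shiftRight E ((lensOf (rs.map f)).getD k 0)) acc))
          acc (Nat.beq E 0) : List ℕ) = _
        rw [hb]
        have hl : (lensOf (rs.map f)).getD k 0 = (combos rs (k + 1) v).length := by
          have : ∀ qs : List ℕ, lensOf (qs.map f) = lensOf qs := by
            intro qs
            induction qs with
            | nil => rfl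
            | cons q qs ihq => simp only [List.map_cons, lensOf, ihq]
          rw [this, lensOf_getD rs k (by omega), length_combos]
        change ext _ _ _ _ _ = _
        rw [combos] at h ⊢
        rw [← hf, ih _ _ _ _ (by omega) (isMask_append_right h hl),
          ih _ _ _ _ hk (isMask_append_left h hl)]
        simp

/-! ### Systematic generator matrices -/

/-- Sum (bitwise xor) of the rows selected by the bits of `w`, starting with bit `o`. -/
def xs : List ℕ → ℕ → ℕ → ℕ
  | [], _, _ => 0
  | r :: rs, o, w => Nat.xor (bif tb w o then r else 0) (xs rs (Nat.succ o) w)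

/-- Rows with an identity matrix in the columns `o, o + 1, …`. -/
def Sys : ℕ → List ℕ → Prop
  | _, [] => True
  | o, r :: rs => r.testBit o = true ∧ (∀ j < rs.length, r.testBit (o + 1 + j) = false) ∧
      (∀ x ∈ rs, x.testBit o = false) ∧ Sys (o + 1) rs

def chkSys : ℕ → List ℕ → Bool
  | _, [] => true
  | o, r :: rs => Nat.beq (Nat.mod (Nat.shiftRight r o) (Nat.pow 2 (Nat.succ rs.length))) 1 &&
      (rs.all (fun x => !tb x o) && chkSys (Nat.succ o) rs)

/-- Number of ones among the `n` bits starting with bit `o`. -/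
def popB (o n m : ℕ) : ℕ := ∑ i ∈ Finset.range n, (m.testBit (o + i)).toNat

theorem popB_succ (o n m : ℕ) : popB o (n + 1) m = (m.testBit o).toNat + popB (o + 1) n m := by
  rw [popB, Finset.sum_range_succ', popB, add_comm]
  congr 1
  refine Finset.sum_congr rfl fun i _ => ?_
  rw [add_assoc, add_comm 1 i]

theorem pop_split (m : ℕ) : pop 62 m = popB 0 31 m + popB 31 31 m := by
  rw [pop, popB, popB, show 62 = 31 + 31 from rfl, Finset.sum_range_add]
  simp

theorem nxor (a b : ℕ) : Nat.xor a b = a ^^^ b := rfl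

theorem testBit_nxor (a b i : ℕ) :
    (Nat.xor a b).testBit i = Bool.xor (a.testBit i) (b.testBit i) := Nat.testBit_xor ..

theorem xs_cons (r : ℕ) (rs : List ℕ) (o w : ℕ) :
    xs (r :: rs) o w = (bif w.testBit o then r else 0) ^^^ xs rs (o + 1) w := by
  rw [xs, tb_eq, nxor]

theorem xs_xor (rs : List ℕ) (o a b : ℕ) : xs rs o (a ^^^ b) = xs rs o a ^^^ xs rs o b := by
  induction rs generalizing o with
  | nil => simp [xs]
  | cons r rs ih =>
    rw [xs_cons, xs_cons, xs_cons, ih, Nat.testBit_xor]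
    apply Nat.eq_of_testBit_eq
    intro i
    simp only [Nat.testBit_xor]
    cases a.testBit o <;> cases b.testBit o <;> simp <;>
      (try cases r.testBit i) <;> cases (xs rs (o+1) a).testBit i <;>
      cases (xs rs (o+1) b).testBit i <;> rfl

theorem xs_zero (rs : List ℕ) (o w : ℕ) (h : popB o rs.length w = 0) : xs rs o w = 0 := by
  induction rs generalizing o with
  | nil => rfl
  | cons r rs ih =>
    rw [List.length_cons, popB_succ] at h
    rw [xs_cons, ih (o + 1) (by omega)]
    cases hb : w.testBit o
    · simp
    · rw [hb] at h; simp at h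

theorem xs_mem_combos (rs : List ℕ) (o w k v : ℕ) (h : popB o rs.length w ≤ k) :
    v ^^^ xs rs o w ∈ combos rs k v := by
  induction rs generalizing o k v with
  | nil => simp [xs, combos]
  | cons r rs ih =>
    cases k with
    | zero => rw [xs_zero _ _ _ (Nat.le_zero.mp h), combos_zero]; simp
    | succ k =>
      rw [List.length_cons, popB_succ] at h
      rw [xs_cons, combos, List.mem_append]
      cases hb : w.testBit o
      · left
        rw [cond_false, Nat.zero_xor]
        exact ih _ _ _ (by omega)
      · right
        rw [cond_true, ← Nat.xor_assoc]
        rw [hb] at h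
        exact ih _ _ _ (by simp at h; omega)

theorem xs_testBit_of_zero (rs : List ℕ) (o w i : ℕ) (h : ∀ x ∈ rs, x.testBit i = false) :
    (xs rs o w).testBit i = false := by
  induction rs generalizing o with
  | nil => simp [xs]
  | cons r rs ih =>
    rw [xs_cons, Nat.testBit_xor, ih _ (fun x hx => h x (List.mem_cons_of_mem _ hx))]
    have := h r List.mem_cons_self
    cases w.testBit o <;> simp [this]

theorem xs_testBit (rs : List ℕ) (o q w : ℕ) (h : Sys o rs) (j : ℕ) (hj : j < rs.length) :
    (xs rs q w).testBit (o + j) = w.testBit (q + j) := by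
  induction rs generalizing o q j with
  | nil => simp at hj
  | cons r rs ih =>
    obtain ⟨h1, h2, h3, h4⟩ := h
    rw [xs_cons, Nat.testBit_xor]
    cases j with
    | zero =>
      simp only [add_zero]
      rw [xs_testBit_of_zero _ _ _ _ h3]
      cases w.testBit q <;> simp [h1]
    | succ j =>
      have hj' : j < rs.length := by simpa using hj
      have e : o + (j + 1) = o + 1 + j := by ring
      have e' : q + (j + 1) = q + 1 + j := by ring
      rw [e, e', ih _ _ h4 j hj']
      have := h2 j hj'
      cases w.testBit q <;> simp [this]

theorem combos_testBit_of_zero (rs : List ℕ) (k v i : ℕ) (h : ∀ x ∈ rs, x.testBit i = false) :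
    ∀ x ∈ combos rs k v, x.testBit i = v.testBit i := by
  induction rs generalizing k v with
  | nil => simp [combos]
  | cons r rs ih =>
    have h' : ∀ x ∈ rs, x.testBit i = false := fun x hx => h x (List.mem_cons_of_mem _ hx)
    cases k with
    | zero => simp [combos]
    | succ k =>
      intro x hx
      rw [combos, List.mem_append] at hx
      rcases hx with hx | hx
      · exact ih _ _ h' x hx
      · rw [ih _ _ h' x hx, testBit_nxor, h r List.mem_cons_self, Bool.xor_false]

theorem combos_popB (rs : List ℕ) (o k v : ℕ) (h : Sys o rs)
    (hv : ∀ j < rs.length, v.testBit (o + j) = false) :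
    ∀ x ∈ combos rs k v, popB o rs.length x ≤ k := by
  induction rs generalizing o k v with
  | nil => simp [popB]
  | cons r rs ih =>
    obtain ⟨h1, h2, h3, h4⟩ := h
    have hv0 : v.testBit o = false := by simpa using hv 0 (by simp)
    have hv1 : ∀ j < rs.length, v.testBit (o + 1 + j) = false := by
      intro j hj
      have := hv (j + 1) (by simpa using hj)
      rwa [show o + (j + 1) = o + 1 + j by ring] at this
    intro x hx
    cases k with
    | zero =>
      rw [combos_zero, List.mem_singleton] at hx
      subst hx
      rw [Nat.le_zero, popB]
      refine Finset.sum_eq_zero fun i hi => ?_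
      rw [hv i (Finset.mem_range.mp hi)]; rfl
    | succ k =>
      rw [List.length_cons, popB_succ]
      rw [combos, List.mem_append] at hx
      rcases hx with hx | hx
      · rw [combos_testBit_of_zero _ _ _ _ h3 x hx, hv0]
        have := ih _ _ _ h4 hv1 x hx
        simpa using this
      · have := ih (o + 1) k (Nat.xor v r) h4
          (fun j hj => by rw [testBit_nxor, hv1 j hj, h2 j hj]; rfl) x hx
        have hb := Bool.toNat_le (x.testBit o)
        omega

theorem combos_exists_xs (rs : List ℕ) (o k v : ℕ) (h : Sys o rs) :
    ∀ x ∈ combos rs k v, ∃ w, (∀ i < o, w.testBit i = false) ∧ x = v ^^^ xs rs o w := by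
  induction rs generalizing o k v with
  | nil =>
    intro x hx
    exact ⟨0, by simp, by simpa [combos, xs] using hx⟩
  | cons r rs ih =>
    obtain ⟨h1, h2, h3, h4⟩ := h
    cases k with
    | zero =>
      intro x hx
      refine ⟨0, by simp, ?_⟩
      rw [xs_zero _ _ _ (by simp [popB])]
      simpa [combos] using hx
    | succ k =>
      intro x hx
      rw [combos, List.mem_append] at hx
      rcases hx with hx | hx
      · obtain ⟨w, hw, rfl⟩ := ih _ _ _ h4 x hx
        refine ⟨w, fun i hi => hw i (by omega), ?_⟩
        rw [xs_cons, hw o (by omega)]; simp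
      · obtain ⟨w, hw, rfl⟩ := ih _ _ _ h4 x hx
        refine ⟨w ^^^ 2 ^ o, fun i hi => ?_, ?_⟩
        · rw [Nat.testBit_xor, hw i (by omega), Nat.testBit_two_pow_of_ne (by omega)]; rfl
        · rw [xs_cons, xs_xor, Nat.testBit_xor, hw o (by omega), Nat.testBit_two_pow_self,
            xs_zero rs (o + 1) (2 ^ o), nxor]
          · simp [Nat.xor_assoc]
          · rw [popB]
            refine Finset.sum_eq_zero fun i _ => ?_
            rw [Nat.testBit_two_pow_of_ne (by omega)]; rfl

/-- The binary vector with the lowest 62 bits of `m` as entries. -/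
def vec (m : ℕ) : Fin 62 → ZMod 2 := fun i => if m.testBit i then 1 else 0

theorem vec_xor (a b : ℕ) : vec (a ^^^ b) = vec a + vec b := by
  funext i
  simp only [vec, Pi.add_apply, Nat.testBit_xor]
  cases a.testBit i <;> cases b.testBit i <;> decide

theorem vec_zero : vec 0 = 0 := by
  funext i; simp [vec]

theorem vec_testBit {a b : ℕ} (h : vec a = vec b) (i : ℕ) (hi : i < 62) :
    a.testBit i = b.testBit i := by
  have := congrFun h ⟨i, hi⟩
  simp only [vec] at this
  revert this
  cases a.testBit i <;> cases b.testBit i <;> simp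

theorem vec_congr {a b : ℕ} (h : ∀ i < 62, a.testBit i = b.testBit i) : vec a = vec b := by
  funext i
  simp only [vec, h i i.2]

theorem exists_vec (v : Fin 62 → ZMod 2) : ∃ m, v = vec m := by
  refine ⟨Nat.ofBits (fun i => decide (v i = 1)), ?_⟩
  funext i
  simp only [vec]
  rw [Nat.testBit_ofBits_lt _ _ i.2]
  have : ∀ z : ZMod 2, z = if decide (z = 1) = true then 1 else 0 := by decide
  exact this _

theorem wt_vec (m : ℕ) : wt (vec m) = pop 62 m := by
  rw [wt, hammingNorm, Finset.card_filter, pop, Finset.sum_range]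
  refine Finset.sum_congr rfl fun i _ => ?_
  simp only [vec]
  by_cases h : m.testBit i = true <;> simp [h]

theorem pop_congr {a b : ℕ} (h : vec a = vec b) : pop 62 a = pop 62 b := by
  rw [← wt_vec, ← wt_vec, h]

theorem dot_vec (a b : ℕ) : ∑ i, vec a i * vec b i = ((pop 62 (a &&& b) : ℕ) : ZMod 2) := by
  rw [pop, Finset.sum_range, Nat.cast_sum]
  refine Finset.sum_congr rfl fun i _ => ?_
  simp only [vec, Nat.testBit_and]
  cases a.testBit i <;> cases b.testBit i <;> simp

theorem nodup_combos (rs : List ℕ) (o k v : ℕ) (h : Sys o rs) (ho : o + rs.length ≤ 62) :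
    ((combos rs k v).map vec).Nodup := by
  induction rs generalizing o k v with
  | nil => simp [combos]
  | cons r rs ih =>
    obtain ⟨h1, h2, h3, h4⟩ := h
    rw [List.length_cons] at ho
    cases k with
    | zero => simp [combos]
    | succ k =>
      rw [combos, List.map_append, List.nodup_append]
      refine ⟨ih _ _ _ h4 (by omega), ih _ _ _ h4 (by omega), ?_⟩
      rintro a ha b hb rfl
      obtain ⟨x, hx, hxa⟩ := List.mem_map.mp ha
      obtain ⟨y, hy, hya⟩ := List.mem_map.mp hb
      have e := vec_testBit (hxa.trans hya.symm) o (by omega)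
      rw [combos_testBit_of_zero _ _ _ _ h3 x hx, combos_testBit_of_zero _ _ _ _ h3 y hy,
        testBit_nxor, h1] at e
      revert e
      cases v.testBit o <;> simp

theorem sys_of_chkSys (o : ℕ) (rs : List ℕ) (h : chkSys o rs = true) : Sys o rs := by
  induction rs generalizing o with
  | nil => trivial
  | cons r rs ih =>
    simp only [chkSys, Bool.and_eq_true, Nat.beq_eq, List.all_eq_true, tb_eq,
      Bool.not_eq_true'] at h
    obtain ⟨h1, h2, h3⟩ := h
    have h1' : (r >>> o) % 2 ^ (rs.length + 1) = 1 := h1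
    have hb : ∀ j < rs.length + 1, r.testBit (o + j) = (1 : ℕ).testBit j := by
      intro j hj
      rw [← h1', Nat.testBit_mod_two_pow, Nat.testBit_shiftRight]
      simp [hj]
    refine ⟨by simpa using hb 0 (by omega), fun j hj => ?_, h2, ih _ h3⟩
    rw [add_assoc, hb _ (by omega), Nat.add_comm]
    simp [Nat.testBit_succ]

/-! ### Parities -/

theorem pop_xor (n a b : ℕ) : pop n (a ^^^ b) + 2 * pop n (a &&& b) = pop n a + pop n b := by
  simp only [pop]
  rw [Finset.mul_sum, ← Finset.sum_add_distrib, ← Finset.sum_add_distrib]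
  refine Finset.sum_congr rfl fun i _ => ?_
  rw [Nat.testBit_xor, Nat.testBit_and]
  cases a.testBit i <;> cases b.testBit i <;> rfl

theorem and_xs_even (r : ℕ) (rs : List ℕ) (o w : ℕ)
    (h : ∀ x ∈ rs, pop 62 (r &&& x) % 2 = 0) : pop 62 (r &&& xs rs o w) % 2 = 0 := by
  induction rs generalizing o with
  | nil => simp [xs, pop]
  | cons a rs ih =>
    have h1 := h a List.mem_cons_self
    have h2 := ih (o + 1) (fun x hx => h x (List.mem_cons_of_mem _ hx))
    rw [xs_cons, Nat.and_xor_distrib_left]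
    have h3 := pop_xor 62 (r &&& (bif w.testBit o then a else 0)) (r &&& xs rs (o + 1) w)
    have h4 : pop 62 (r &&& (bif w.testBit o then a else 0)) % 2 = 0 := by
      cases w.testBit o
      · simp [pop]
      · simpa using h1
    omega

theorem xs_quad (s : ℕ) (rs : List ℕ) (o w : ℕ)
    (h : ∀ x ∈ rs, ∀ y ∈ rs, pop 62 (x &&& y) % 2 = 0)
    (hs : ∀ x ∈ rs, pop 62 x % 4 = 2 * (pop 62 (s &&& x) % 2)) :
    pop 62 (xs rs o w) % 4 = 2 * (pop 62 (s &&& xs rs o w) % 2) := by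
  induction rs generalizing o with
  | nil => simp [xs, pop]
  | cons a rs ih =>
    have h1 := hs a List.mem_cons_self
    have h2 := ih (o + 1)
      (fun x hx y hy => h x (List.mem_cons_of_mem _ hx) y (List.mem_cons_of_mem _ hy))
      (fun x hx => hs x (List.mem_cons_of_mem _ hx))
    have h0 := and_xs_even a rs (o + 1) w
      (fun x hx => h a List.mem_cons_self x (List.mem_cons_of_mem _ hx))
    rw [xs_cons]
    cases w.testBit o
    · simpa using h2
    · rw [cond_true]
      have h3 := pop_xor 62 a (xs rs (o + 1) w)
      have h4 := pop_xor 62 (s &&& a) (s &&& xs rs (o + 1) w)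
      rw [← Nat.and_xor_distrib_left] at h4
      omega

/-! ### The codes -/

/-- Number of ones among the lowest `n` bits, in a form suited to evaluation. -/
def popc : ℕ → ℕ → ℕ
  | 0, _ => 0
  | n + 1, m => Nat.add (Nat.mod (Nat.shiftRight m n) 2) (popc n m)

theorem popc_eq (n m : ℕ) : popc n m = pop n m := by
  induction n with
  | zero => simp [popc, pop]
  | succ n ih =>
    have e : (m >>> n) % 2 = (m.testBit n).toNat := by
      rw [Nat.testBit, Nat.and_comm, Nat.and_one_is_mod]
      rcases Nat.mod_two_eq_zero_or_one (m >>> n) with h | h <;> simp [h]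
    rw [popc, pop, Finset.sum_range_succ, ih, pop, ← e, add_comm]
    rfl

def chkOrth (rs : List ℕ) : Bool :=
  rs.all fun x => rs.all fun y => Nat.beq (Nat.mod (popc 62 (Nat.land x y)) 2) 0

def chkQuad (s : ℕ) (rs : List ℕ) : Bool :=
  rs.all fun x => Nat.beq (Nat.mod (popc 62 x) 4) (Nat.mul 2 (Nat.mod (popc 62 (Nat.land s x)) 2))

def chkSmall (d : CData) : Bool :=
  Nat.beq d.g.length 31 && (Nat.beq d.h.length 31 && (chkSys 0 d.g && (chkSys 31 d.h &&
  (chkOrth d.g && (chkQuad d.sL d.g && (chkQuad d.sR d.g &&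
  (d.h.all (fun x => Nat.beq (xs d.g 0 x) x) && (d.g.all (fun x => Nat.beq (xs d.h 31 x) x) &&
  (d.g.any (fun x => !(Nat.beq (Nat.mod (popc 62 x) 4) 0)) &&
  (Nat.beq (Nat.mod d.sL (Nat.pow 2 31)) 0 && (Nat.beq (Nat.shiftRight d.sR 31) 0 &&
  (Nat.beq (xs d.g 0 d.c12) d.c12 && (Nat.beq (popc 62 d.c12) 12 &&
  (Nat.beq (xs d.g 0 (Nat.xor d.s11 d.sL)) (Nat.xor d.s11 d.sL) &&
  Nat.beq (popc 62 d.s11) 11))))))))))))))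

/-- The facts established by the small check. -/
structure Good (d : CData) : Prop where
  lg : d.g.length = 31
  lh : d.h.length = 31
  sg : Sys 0 d.g
  sh : Sys 31 d.h
  orth : ∀ x ∈ d.g, ∀ y ∈ d.g, pop 62 (x &&& y) % 2 = 0
  qL : ∀ x ∈ d.g, pop 62 x % 4 = 2 * (pop 62 (d.sL &&& x) % 2)
  qR : ∀ x ∈ d.g, pop 62 x % 4 = 2 * (pop 62 (d.sR &&& x) % 2)
  hg : ∀ x ∈ d.h, xs d.g 0 x = x
  gh : ∀ x ∈ d.g, xs d.h 31 x = x
  sing : ∃ x ∈ d.g, pop 62 x % 4 ≠ 0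
  zL : ∀ j < 31, d.sL.testBit (0 + j) = false
  zR : ∀ j < 31, d.sR.testBit (31 + j) = false
  c12 : xs d.g 0 d.c12 = d.c12
  p12 : pop 62 d.c12 = 12
  s11 : xs d.g 0 (d.s11 ^^^ d.sL) = d.s11 ^^^ d.sL
  p11 : pop 62 d.s11 = 11

theorem good_of_chk {d : CData} (h : chkSmall d = true) : Good d := by
  simp only [chkSmall, chkOrth, chkQuad, Bool.and_eq_true, Nat.beq_eq, List.all_eq_true,
    List.any_eq_true, popc_eq, Bool.not_eq_true'] at h
  obtain ⟨h1, h2, h3, h4, h5, h6, h7, h8, h9, ⟨x, hx, hx'⟩, h11, h12, h13, h14, h15, h16⟩ := h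
  have h11' : d.sL % 2 ^ 31 = 0 := h11
  have h12' : d.sR >>> 31 = 0 := h12
  refine ⟨h1, h2, sys_of_chkSys _ _ h3, sys_of_chkSys _ _ h4, h5, h6, h7, h8, h9,
    ⟨x, hx, fun e => ?_⟩, fun j hj => ?_, fun j _ => ?_, h13, h14, h15, h16⟩
  · have : Nat.beq ((pop 62 x).mod 4) 0 = true := by rw [Nat.beq_eq]; exact e
    rw [this] at hx'; simp at hx'
  · have := Nat.testBit_mod_two_pow d.sL 31 j
    rw [h11'] at this
    simpa [hj] using this.symm
  · rw [← Nat.testBit_shiftRight, h12', Nat.zero_testBit]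

/-- The code generated by a list of rows. -/
def codeOf (o : ℕ) (rs : List ℕ) : Submodule (ZMod 2) (Fin 62 → ZMod 2) where
  carrier := {x | ∃ w, x = vec (xs rs o w)}
  add_mem' := by
    rintro _ _ ⟨a, rfl⟩ ⟨b, rfl⟩
    exact ⟨a ^^^ b, by rw [xs_xor, vec_xor]⟩
  zero_mem' := ⟨0, by rw [xs_zero _ _ _ (by simp [popB]), vec_zero]⟩
  smul_mem' := by
    rintro c _ ⟨a, rfl⟩
    have : ∀ c : ZMod 2, c = 0 ∨ c = 1 := by decide
    rcases this c with rfl | rfl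
    · exact ⟨0, by rw [xs_zero rs o 0 (by simp [popB]), vec_zero, zero_smul]⟩
    · exact ⟨a, by rw [one_smul]⟩

theorem vec_xs_mem (S : Submodule (ZMod 2) (Fin 62 → ZMod 2)) (rs : List ℕ) (o w : ℕ)
    (h : ∀ r ∈ rs, vec r ∈ S) : vec (xs rs o w) ∈ S := by
  induction rs generalizing o with
  | nil => simp [xs, vec_zero]
  | cons r rs ih =>
    rw [xs_cons, vec_xor]
    refine S.add_mem ?_ (ih _ fun x hx => h x (List.mem_cons_of_mem _ hx))
    cases w.testBit o
    · simp [vec_zero]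
    · exact h r List.mem_cons_self

/-- The code described by `d`. -/
def CData.code (d : CData) : Submodule (ZMod 2) (Fin 62 → ZMod 2) := codeOf 0 d.g

theorem mem_codeOf {o : ℕ} {rs : List ℕ} {x : Fin 62 → ZMod 2} :
    x ∈ codeOf o rs ↔ ∃ w, x = vec (xs rs o w) := Iff.rfl

theorem codeOf_congr {o o' : ℕ} {rs : List ℕ} {m w : ℕ} (hs : Sys o rs)
    (hm : vec m = vec (xs rs o' w)) (ho : o + rs.length ≤ 62) :
    xs rs o' w = xs rs o m := by
  have hb : ∀ j < rs.length, w.testBit (o' + j) = m.testBit (o + j) := by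
    intro j hj
    rw [← xs_testBit rs o o' w hs j hj]
    exact (vec_testBit hm (o + j) (by omega)).symm
  clear hm hs ho
  induction rs generalizing o o' with
  | nil => rfl
  | cons r rs ih =>
    rw [xs_cons, xs_cons]
    have h0 := hb 0 (by simp)
    simp only [add_zero] at h0
    rw [h0, ih (o := o + 1) (o' := o' + 1)]
    intro j hj
    have := hb (j + 1) (by simpa using hj)
    rwa [show o' + (j + 1) = o' + 1 + j by ring, show o + (j + 1) = o + 1 + j by ring] at this

theorem Good.code_eq {d : CData} (G : Good d) : codeOf 31 d.h = d.code := by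
  apply le_antisymm
  · rintro _ ⟨w, rfl⟩
    exact vec_xs_mem _ _ _ _ fun r hr => ⟨r, by rw [G.hg r hr]⟩
  · rintro _ ⟨w, rfl⟩
    exact vec_xs_mem _ _ _ _ fun r hr => ⟨r, by rw [G.gh r hr]⟩

theorem Good.memL {d : CData} (G : Good d) {m : ℕ} :
    vec m ∈ d.code ↔ vec m = vec (xs d.g 0 m) := by
  constructor
  · rintro ⟨w, hw⟩
    rw [hw, codeOf_congr G.sg hw (by rw [G.lg]; norm_num)]
  · exact fun h => ⟨m, h⟩

theorem Good.memR {d : CData} (G : Good d) {m : ℕ} :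
    vec m ∈ d.code ↔ vec m = vec (xs d.h 31 m) := by
  rw [← G.code_eq]
  constructor
  · rintro ⟨w, hw⟩
    rw [hw, codeOf_congr G.sh hw (by rw [G.lh])]
  · exact fun h => ⟨m, h⟩

/-- The inner product. -/
def ip (x y : Fin 62 → ZMod 2) : ZMod 2 := ∑ i, x i * y i

theorem ip_vec (a b : ℕ) : ip (vec a) (vec b) = ((pop 62 (a &&& b) : ℕ) : ZMod 2) := dot_vec a b

theorem ip_add (x y z : Fin 62 → ZMod 2) : ip (x + y) z = ip x z + ip y z := by
  simp [ip, add_mul, Finset.sum_add_distrib]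

theorem ip_comm (x y : Fin 62 → ZMod 2) : ip x y = ip y x := by
  simp [ip, mul_comm]

theorem ip_add' (x y z : Fin 62 → ZMod 2) : ip x (y + z) = ip x y + ip x z := by
  rw [ip_comm, ip_add, ip_comm y, ip_comm z]

theorem cast_eq_zero_iff (n : ℕ) : ((n : ℕ) : ZMod 2) = 0 ↔ n % 2 = 0 := by
  rw [ZMod.natCast_eq_zero_iff]; omega

theorem Good.ip_zero {d : CData} (G : Good d) {x y : Fin 62 → ZMod 2} (hx : x ∈ d.code)
    (hy : y ∈ d.code) : ip x y = 0 := by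
  obtain ⟨a, rfl⟩ := hx
  obtain ⟨b, rfl⟩ := hy
  rw [ip_vec, cast_eq_zero_iff]
  apply and_xs_even
  intro r hr
  rw [Nat.and_comm]
  apply and_xs_even
  exact fun z hz => G.orth r hr z hz

theorem Good.mem_of_ip {d : CData} (G : Good d) {y : Fin 62 → ZMod 2}
    (hy : ∀ c ∈ d.code, ip y c = 0) : y ∈ d.code := by
  obtain ⟨m, rfl⟩ := exists_vec y
  rw [G.memL]
  have hz : ∀ c ∈ d.code, ip (vec (m ^^^ xs d.g 0 m)) c = 0 := by
    intro c hc
    rw [vec_xor, ip_add, hy c hc, G.ip_zero ⟨m, rfl⟩ hc, add_zero]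
  have hL : ∀ i < 31, (m ^^^ xs d.g 0 m).testBit i = false := by
    intro i hi
    have := xs_testBit d.g 0 0 m G.sg i (by rw [G.lg]; exact hi)
    rw [zero_add] at this
    rw [Nat.testBit_xor, this, Bool.xor_self]
  have hR : ∀ j < 31, (m ^^^ xs d.g 0 m).testBit (31 + j) = false := by
    intro j hj
    have h1 : vec (xs d.h 31 (2 ^ (31 + j))) ∈ d.code := by
      rw [← G.code_eq]; exact ⟨_, rfl⟩
    have h2 := hz _ h1
    rw [ip, Finset.sum_eq_single ⟨31 + j, by omega⟩] at h2
    · simp only [vec] at h2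
      rw [xs_testBit d.h 31 31 _ G.sh j (by rw [G.lh]; exact hj), Nat.testBit_two_pow_self] at h2
      revert h2
      cases (m ^^^ xs d.g 0 m).testBit (31 + j) <;> simp
    · rintro ⟨i, hi⟩ - hne
      simp only [vec]
      by_cases h : i < 31
      · rw [hL i h]; simp
      · obtain ⟨k, rfl⟩ : ∃ k, i = 31 + k := ⟨i - 31, by omega⟩
        rw [xs_testBit d.h 31 31 _ G.sh k (by rw [G.lh]; omega), Nat.testBit_two_pow_of_ne]
        · simp
        · intro e; apply hne; simp [Fin.ext_iff]; omega
    · simp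
  refine vec_congr fun i hi => ?_
  have h3 : (m ^^^ xs d.g 0 m).testBit i = false := by
    by_cases h : i < 31
    · exact hL i h
    · have := hR (i - 31) (by omega)
      rwa [show 31 + (i - 31) = i by omega] at this
  rw [Nat.testBit_xor] at h3
  revert h3
  cases m.testBit i <;> cases (xs d.g 0 m).testBit i <;> simp

theorem Good.selfDual {d : CData} (G : Good d) : IsSelfDual d.code := by
  ext x
  exact ⟨fun hx y hy => G.ip_zero hx hy, fun h => G.mem_of_ip h⟩

theorem Good.four_dvd {d : CData} (G : Good d) (s : ℕ)
    (hs : ∀ x ∈ d.g, pop 62 x % 4 = 2 * (pop 62 (s &&& x) % 2)) {c : Fin 62 → ZMod 2}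
    (hc : c ∈ d.code) : 4 ∣ wt c ↔ ip (vec s) c = 0 := by
  obtain ⟨w, rfl⟩ := hc
  have := xs_quad s d.g 0 w G.orth hs
  rw [wt_vec, ip_vec, cast_eq_zero_iff]
  omega

theorem Good.exists_odd {d : CData} (G : Good d) : ∃ c ∈ d.code, ¬ 4 ∣ wt c := by
  obtain ⟨x, hx, h⟩ := G.sing
  refine ⟨vec x, ?_, ?_⟩
  · have h1 := G.gh x hx
    rw [← G.code_eq]; exact ⟨x, by rw [h1]⟩
  · rw [wt_vec]; omega

theorem zmod2_cases (z : ZMod 2) : z = 0 ∨ z = 1 := by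
  revert z; decide

theorem Good.mem_shadow {d : CData} (G : Good d) (s : ℕ)
    (hs : ∀ x ∈ d.g, pop 62 x % 4 = 2 * (pop 62 (s &&& x) % 2)) (x : Fin 62 → ZMod 2) :
    x ∈ shadow d.code ↔ x + vec s ∈ d.code := by
  obtain ⟨c₁, hc₁, h₁⟩ := G.exists_odd
  have f := fun {c} hc => G.four_dvd s hs (c := c) hc
  have hs₁ : ip (vec s) c₁ = 1 := by
    rcases zmod2_cases (ip (vec s) c₁) with h | h
    · exact absurd ((f hc₁).mpr h) h₁
    · exact h
  constructor
  · rintro ⟨hx, hxC⟩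
    have hx' : ∀ c ∈ d.code, ip (vec s) c = 0 → ip x c = 0 := fun c hc h =>
      hx c ⟨hc, (f hc).mpr h⟩
    have key : ∀ c ∈ d.code, ip (vec s) c = 1 → ip x c = ip x c₁ := by
      intro c hc h
      have h2 := hx' (c + c₁) (d.code.add_mem hc hc₁) (by rw [ip_add', h, hs₁]; decide)
      rw [ip_add'] at h2
      revert h2
      generalize ip x c = a; generalize ip x c₁ = b
      revert a b; decide
    rcases zmod2_cases (ip x c₁) with h | h
    · exfalso
      apply hxC
      refine G.mem_of_ip fun c hc => ?_
      rcases zmod2_cases (ip (vec s) c) with h' | h'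
      · exact hx' c hc h'
      · rw [key c hc h', h]
    · refine G.mem_of_ip fun c hc => ?_
      rw [ip_add]
      rcases zmod2_cases (ip (vec s) c) with h' | h'
      · rw [hx' c hc h', h', add_zero]
      · rw [key c hc h', h, h']; decide
  · intro h
    refine ⟨fun c hc => ?_, fun hxC => ?_⟩
    · have h2 := G.ip_zero h hc.1
      rw [ip_add, (f hc.1).mp hc.2, add_zero] at h2
      exact h2
    · have h2 := G.ip_zero h hc₁
      rw [ip_add, G.ip_zero hxC hc₁, hs₁] at h2
      revert h2; decide

theorem Good.finrank {d : CData} (G : Good d) : Module.finrank (ZMod 2) d.code = 31 := by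
  let φ : d.code →ₗ[ZMod 2] (Fin 31 → ZMod 2) :=
    (LinearMap.funLeft (ZMod 2) (ZMod 2) (Fin.castLE (by norm_num : 31 ≤ 62))).comp
      d.code.subtype
  have hφ : ∀ (m : ℕ) (hm : vec m ∈ d.code) (i : Fin 31),
      φ ⟨vec m, hm⟩ i = if m.testBit i then 1 else 0 := fun _ _ _ => rfl
  have hinj : Function.Injective φ := by
    rw [← LinearMap.ker_eq_bot, LinearMap.ker_eq_bot']
    rintro ⟨x, hx⟩ h
    obtain ⟨m, rfl⟩ := exists_vec x
    rw [Subtype.ext_iff]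
    change vec m = 0
    rw [G.memL.mp hx, xs_zero, vec_zero]
    rw [G.lg, popB]
    refine Finset.sum_eq_zero fun i hi => ?_
    have := congrFun h ⟨i, Finset.mem_range.mp hi⟩
    rw [hφ] at this
    rw [zero_add]
    revert this
    by_cases hb : m.testBit i = true <;> simp [hb]
  have hsurj : Function.Surjective φ := by
    intro y
    let m := Nat.ofBits (fun i => decide (y i = 1))
    have hm : vec (xs d.g 0 m) ∈ d.code := ⟨m, rfl⟩
    refine ⟨⟨vec (xs d.g 0 m), hm⟩, ?_⟩
    funext i
    have h1 := xs_testBit d.g 0 0 m G.sg i (by rw [G.lg]; exact i.2)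
    rw [zero_add] at h1
    rw [hφ, h1, Nat.testBit_ofBits_lt _ _ i.2]
    have : ∀ z : ZMod 2, (if decide (z = 1) = true then 1 else 0) = z := by decide
    exact this _
  rw [(LinearEquiv.ofBijective φ ⟨hinj, hsurj⟩).finrank_eq]
  simp

/-! ### Minimum weights and shadow vectors of weight 11 -/

theorem mem_combos_of {rs : List ℕ} {o s m : ℕ} (hl : rs.length = 31)
    (hz : ∀ j < 31, s.testBit (o + j) = false)
    (hm : vec (m ^^^ s) = vec (xs rs o (m ^^^ s))) (hp : popB o 31 m ≤ 5) :
    ∃ m' ∈ combos rs 5 s, vec m' = vec m := by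
  refine ⟨s ^^^ xs rs o (m ^^^ s), xs_mem_combos _ _ _ _ _ ?_, ?_⟩
  · rw [hl]
    refine le_trans (le_of_eq ?_) hp
    refine Finset.sum_congr rfl fun i hi => ?_
    rw [Nat.testBit_xor, hz i (Finset.mem_range.mp hi), Bool.xor_false]
  · rw [vec_xor, ← hm, ← vec_xor, Nat.xor_comm m s, ← Nat.xor_assoc, Nat.xor_self, Nat.zero_xor]

/-- All checks except for the invariant. -/
structure Checked (d : CData) : Prop extends Good d where
  cg : ∀ x ∈ combos d.g 5 0, x = 0 ∨ 12 ≤ pop 62 x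
  ch : ∀ x ∈ combos d.h 5 0, x = 0 ∨ 12 ≤ pop 62 x
  tg : ∀ x ∈ combos d.g 5 d.sL, 11 ≤ pop 62 x
  th : ∀ x ∈ combos d.h 5 d.sR, 11 ≤ pop 62 x

theorem Good.shadowL {d : CData} (G : Good d) (m : ℕ) :
    vec m ∈ shadow d.code ↔ vec (m ^^^ d.sL) = vec (xs d.g 0 (m ^^^ d.sL)) := by
  rw [G.mem_shadow d.sL G.qL, ← vec_xor, G.memL]

theorem Good.shadowR {d : CData} (G : Good d) (m : ℕ) :
    vec m ∈ shadow d.code ↔ vec (m ^^^ d.sR) = vec (xs d.h 31 (m ^^^ d.sR)) := by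
  rw [G.mem_shadow d.sR G.qR, ← vec_xor, G.memR]

theorem Checked.code_ge {d : CData} (K : Checked d) {x : Fin 62 → ZMod 2} (hx : x ∈ d.code)
    (h0 : x ≠ 0) : 12 ≤ wt x := by
  obtain ⟨m, rfl⟩ := exists_vec x
  rw [wt_vec]
  by_contra hlt
  have hsp := pop_split m
  have : ∃ m', (m' = 0 ∨ 12 ≤ pop 62 m') ∧ vec m' = vec m := by
    by_cases hp : popB 0 31 m ≤ 5
    · obtain ⟨m', h1, h2⟩ := mem_combos_of (s := 0) (o := 0) K.lg (by simp)
        (by simpa using K.memL.mp hx) hp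
      exact ⟨m', K.cg m' h1, h2⟩
    · obtain ⟨m', h1, h2⟩ := mem_combos_of (s := 0) (o := 31) K.lh (by simp)
        (by simpa using K.memR.mp hx) (by omega)
      exact ⟨m', K.ch m' h1, h2⟩
  obtain ⟨m', h1, h2⟩ := this
  rcases h1 with rfl | h1
  · rw [vec_zero] at h2; exact h0 h2.symm
  · rw [pop_congr h2] at h1; exact hlt h1

/-- Left part of the list of shadow vectors of weight 11. -/
def LA (d : CData) : List ℕ := (combos d.g 5 d.sL).filter (fun x => decide (pop 62 x < 12))

/-- Right part of the list of shadow vectors of weight 11. -/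
def LB (d : CData) : List ℕ := (combos d.h 5 d.sR).filter (fun x => decide (pop 62 x < 12))

theorem Checked.mem_list {d : CData} (K : Checked d) {m : ℕ} (hx : vec m ∈ shadow d.code)
    (h : pop 62 m < 12) : ∃ m' ∈ LA d ++ LB d, vec m' = vec m := by
  have hsp := pop_split m
  by_cases hp : popB 0 31 m ≤ 5
  · obtain ⟨m', h1, h2⟩ := mem_combos_of (o := 0) K.lg K.zL ((K.shadowL m).mp hx) hp
    refine ⟨m', List.mem_append_left _ (List.mem_filter.mpr ⟨h1, ?_⟩), h2⟩
    rw [pop_congr h2]; exact decide_eq_true h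
  · obtain ⟨m', h1, h2⟩ := mem_combos_of (o := 31) K.lh K.zR ((K.shadowR m).mp hx) (by omega)
    refine ⟨m', List.mem_append_right _ (List.mem_filter.mpr ⟨h1, ?_⟩), h2⟩
    rw [pop_congr h2]; exact decide_eq_true h

theorem Checked.of_mem_LA {d : CData} (K : Checked d) {m : ℕ} (h : m ∈ LA d) :
    vec m ∈ shadow d.code ∧ pop 62 m = 11 ∧ popB 0 31 m ≤ 5 := by
  obtain ⟨h1, h2⟩ := List.mem_filter.mp h
  refine ⟨?_, ?_, ?_⟩
  · obtain ⟨w, -, rfl⟩ := combos_exists_xs _ _ _ _ K.sg m h1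
    rw [K.mem_shadow d.sL K.qL, ← vec_xor, Nat.xor_comm, ← Nat.xor_assoc, Nat.xor_self,
      Nat.zero_xor]
    exact ⟨w, rfl⟩
  · have := K.tg m h1
    have := of_decide_eq_true h2
    omega
  · have := combos_popB d.g 0 5 d.sL K.sg (by rw [K.lg]; exact K.zL) m h1
    rwa [K.lg] at this

theorem Checked.of_mem_LB {d : CData} (K : Checked d) {m : ℕ} (h : m ∈ LB d) :
    vec m ∈ shadow d.code ∧ pop 62 m = 11 ∧ popB 31 31 m ≤ 5 := by
  obtain ⟨h1, h2⟩ := List.mem_filter.mp h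
  refine ⟨?_, ?_, ?_⟩
  · obtain ⟨w, -, rfl⟩ := combos_exists_xs _ _ _ _ K.sh m h1
    rw [K.mem_shadow d.sR K.qR, ← vec_xor, Nat.xor_comm, ← Nat.xor_assoc, Nat.xor_self,
      Nat.zero_xor, ← K.code_eq]
    exact ⟨w, rfl⟩
  · have := K.th m h1
    have := of_decide_eq_true h2
    omega
  · have := combos_popB d.h 31 5 d.sR K.sh (by rw [K.lh]; exact K.zR) m h1
    rwa [K.lh] at this

theorem Checked.shadow_ge {d : CData} (K : Checked d) {x : Fin 62 → ZMod 2}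
    (hx : x ∈ shadow d.code) : 11 ≤ wt x := by
  obtain ⟨m, rfl⟩ := exists_vec x
  rw [wt_vec]
  by_contra hlt
  obtain ⟨m', h1, h2⟩ := K.mem_list hx (by omega)
  rw [← pop_congr h2] at hlt
  rcases List.mem_append.mp h1 with h | h
  · have := (K.of_mem_LA h).2.1; omega
  · have := (K.of_mem_LB h).2.1; omega

theorem minWtSet_eq {S : Set (Fin 62 → ZMod 2)} {k : ℕ} (hk : ∀ x ∈ S, x ≠ 0 → k ≤ wt x)
    (h : ∃ x ∈ S, x ≠ 0 ∧ wt x = k) : minWtSet S = k := by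
  apply le_antisymm
  · exact Nat.sInf_le h
  · obtain ⟨x, hx, h0, h1⟩ := Nat.sInf_mem (s := {w | ∃ x ∈ S, x ≠ 0 ∧ wt x = w}) ⟨k, h⟩
    rw [minWtSet, ← h1]
    exact hk x hx h0

theorem vec_ne_zero {m : ℕ} (h : pop 62 m ≠ 0) : vec m ≠ 0 := by
  intro h0
  rw [← vec_zero] at h0
  apply h
  rw [pop_congr h0]
  simp [pop]

theorem Checked.minWt_code {d : CData} (K : Checked d) : minWt d.code = 12 := by
  refine minWtSet_eq (fun x hx h0 => K.code_ge hx h0) ⟨vec d.c12, ?_, ?_, ?_⟩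
  · exact ⟨d.c12, by rw [K.c12]⟩
  · exact vec_ne_zero (by rw [K.p12]; norm_num)
  · rw [wt_vec, K.p12]

theorem Checked.minWt_shadow {d : CData} (K : Checked d) : minWtSet (shadow d.code) = 11 := by
  refine minWtSet_eq (fun x hx _ => K.shadow_ge hx) ⟨vec d.s11, ?_, ?_, ?_⟩
  · rw [K.shadowL, K.s11]
  · exact vec_ne_zero (by rw [K.p11]; norm_num)
  · rw [wt_vec, K.p11]

theorem Checked.nodup {d : CData} (K : Checked d) : ((LA d ++ LB d).map vec).Nodup := by
  rw [List.map_append, List.nodup_append]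
  refine ⟨?_, ?_, ?_⟩
  · exact (nodup_combos d.g 0 5 d.sL K.sg (by rw [K.lg]; norm_num)).sublist
      (List.filter_sublist.map _)
  · exact (nodup_combos d.h 31 5 d.sR K.sh (by rw [K.lh])).sublist
      (List.filter_sublist.map _)
  · rintro a ha b hb rfl
    obtain ⟨x, hx, hxa⟩ := List.mem_map.mp ha
    obtain ⟨y, hy, hya⟩ := List.mem_map.mp hb
    have e := hxa.trans hya.symm
    obtain ⟨-, h2, h3⟩ := K.of_mem_LA hx
    obtain ⟨-, h5, h6⟩ := K.of_mem_LB hy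
    have h7 : popB 31 31 x = popB 31 31 y := by
      refine Finset.sum_congr rfl fun i hi => ?_
      rw [vec_testBit e _ (by have := Finset.mem_range.mp hi; omega)]
    have := pop_split x
    omega

/-- Number of shadow vectors of weight 11 with ones in positions `i` and `j`. -/
noncomputable def lam (C : Submodule (ZMod 2) (Fin 62 → ZMod 2)) (i j : Fin 62) : ℕ :=
  Set.ncard {x | x ∈ shadow C ∧ wt x = 11 ∧ x i = 1 ∧ x j = 1}

/-- An invariant of codes. -/
noncomputable def Jinv (C : Submodule (ZMod 2) (Fin 62 → ZMod 2)) : ℕ := ∑ i, ∑ j, lam C i j ^ 2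

theorem sum_filter_aux (l : List ℕ) (p : ℕ → Bool) :
    (l.filter p).length = (l.map fun m => (p m).toNat).sum := by
  induction l with
  | nil => rfl
  | cons a l ih => cases h : p a <;> simp [h, ih, add_comm]

theorem Checked.lam_eq {d : CData} (K : Checked d) (i j : Fin 62) :
    lam d.code i j =
      ((LA d ++ LB d).map fun m => (m.testBit i && m.testBit j).toNat).sum := by
  have hv : ∀ (m : ℕ) (i : Fin 62), vec m i = 1 ↔ m.testBit i = true := by
    intro m i
    simp only [vec]
    by_cases h : m.testBit i = true <;> simp [h]
  have hset : {x | x ∈ shadow d.code ∧ wt x = 11 ∧ x i = 1 ∧ x j = 1} =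
      ((((LA d ++ LB d).filter fun m => m.testBit i && m.testBit j).map vec).toFinset :
        Set (Fin 62 → ZMod 2)) := by
    ext x
    simp only [Set.mem_ofPred_eq, List.coe_toFinset, List.mem_map, List.mem_filter,
      Bool.and_eq_true]
    constructor
    · rintro ⟨h1, h2, h3, h4⟩
      obtain ⟨m, rfl⟩ := exists_vec x
      rw [wt_vec] at h2
      obtain ⟨m', h5, h6⟩ := K.mem_list h1 (by omega)
      refine ⟨m', ⟨h5, ?_, ?_⟩, h6⟩
      · rw [← hv, h6]; exact h3
      · rw [← hv, h6]; exact h4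
    · rintro ⟨m, ⟨h1, h2, h3⟩, rfl⟩
      rw [wt_vec, hv, hv]
      rcases List.mem_append.mp h1 with h | h
      · exact ⟨(K.of_mem_LA h).1, (K.of_mem_LA h).2.1, h2, h3⟩
      · exact ⟨(K.of_mem_LB h).1, (K.of_mem_LB h).2.1, h2, h3⟩
  rw [lam, hset, Set.ncard_coe_finset, List.toFinset_card_of_nodup, List.length_map,
    sum_filter_aux]
  exact K.nodup.sublist (List.filter_sublist.map _)

/-! ### Evaluation of the invariant -/

theorem sp_succ (w n m : ℕ) : sp w (n + 1) m = 2 ^ w * sp w n (m / 2) + m % 2 := rfl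

theorem sp_xor (w n a b : ℕ) (hw : 0 < w) :
    sp w n (Nat.xor a b) = Nat.xor (sp w n a) (sp w n b) := by
  induction n generalizing a b with
  | zero => rw [nxor, nxor]; simp [sp]
  | succ n ih =>
    rw [nxor, nxor, sp_succ, sp_succ, sp_succ]
    have h2 : ∀ x, x % 2 < 2 ^ w := fun x =>
      lt_of_lt_of_le (Nat.mod_lt x (by norm_num)) (by
        calc 2 = 2 ^ 1 := rfl
          _ ≤ 2 ^ w := Nat.pow_le_pow_right (by norm_num) hw)
    have hd : (a ^^^ b) / 2 = Nat.xor (a / 2) (b / 2) := by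
      apply Nat.eq_of_testBit_eq; intro i
      rw [testBit_nxor, Nat.testBit_div_two, Nat.testBit_div_two, Nat.testBit_div_two,
        Nat.testBit_xor]
    have hm : (a ^^^ b) % 2 = (a % 2) ^^^ (b % 2) := by
      have := Nat.xor_mod_two_pow (a := a) (b := b) (n := 1)
      simpa using this
    rw [hd, ih, hm, nxor]
    apply Nat.eq_of_testBit_eq; intro i
    rw [Nat.testBit_xor, Nat.testBit_two_pow_mul_add _ (h2 _), Nat.testBit_two_pow_mul_add _ (h2 _),
      Nat.testBit_two_pow_mul_add _ (hm ▸ h2 _)]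
    by_cases hi : i < w <;> simp [hi]

theorem sp_eq (w n m : ℕ) : sp w n m = ∑ i ∈ Finset.range n, (2 ^ w) ^ i * (m.testBit i).toNat := by
  induction n generalizing m with
  | zero => rfl
  | succ n ih =>
    rw [sp_succ, ih, Finset.sum_range_succ', Finset.mul_sum]
    congr 1
    · refine Finset.sum_congr rfl fun i _ => ?_
      rw [Nat.testBit_div_two, pow_succ]; ring
    · rw [Nat.testBit_zero]
      rcases Nat.mod_two_eq_zero_or_one m with h | h <;> simp [h]

theorem Lside_eq (w : ℕ) (hw : 0 < w) (rs : List ℕ) (s : ℕ) (acc : List ℕ) :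
    Lside w rs s acc =
      ((combos rs 5 s).filter (fun x => decide (pop 62 x < 12))).map (sp w 62) ++ acc := by
  rw [Lside]
  exact ext_eq (sp w 62) (fun a b => sp_xor w 62 a b hw) rs 5 s _ acc _ le_rfl (isMask_E rs s 62)

theorem Lall_eq (d : CData) (w : ℕ) (hw : 0 < w) :
    Lall d w = (LA d ++ LB d).map (sp w 62) := by
  rw [Lall, Lside_eq w hw, Lside_eq w hw, List.append_nil, List.map_append]; rfl

theorem dot_map (l : List ℕ) (f g : ℕ → ℕ) :
    dot (l.map f) (l.map g) = (l.map fun m => f m * g m).sum := by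
  induction l with
  | nil => rfl
  | cons a l ih =>
    rw [List.map_cons, List.map_cons, List.map_cons, List.sum_cons, ← ih]; rfl

theorem digits_mod (B : ℕ) (f : ℕ → ℕ) (n : ℕ) (hf : f 0 < B) :
    (∑ i ∈ Finset.range (n + 1), B ^ i * f i) % B = f 0 := by
  rw [Finset.sum_range_succ']
  have : ∑ i ∈ Finset.range n, B ^ (i + 1) * f (i + 1) =
      B * ∑ i ∈ Finset.range n, B ^ i * f (i + 1) := by
    rw [Finset.mul_sum]
    exact Finset.sum_congr rfl fun i _ => by rw [pow_succ]; ring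
  rw [this, pow_zero, one_mul, Nat.mul_add_mod, Nat.mod_eq_of_lt hf]

theorem digits_div (B : ℕ) (f : ℕ → ℕ) (n : ℕ) (hf : f 0 < B) :
    (∑ i ∈ Finset.range (n + 1), B ^ i * f i) / B = ∑ i ∈ Finset.range n, B ^ i * f (i + 1) := by
  rw [Finset.sum_range_succ']
  have : ∑ i ∈ Finset.range n, B ^ (i + 1) * f (i + 1) =
      B * ∑ i ∈ Finset.range n, B ^ i * f (i + 1) := by
    rw [Finset.mul_sum]
    exact Finset.sum_congr rfl fun i _ => by rw [pow_succ]; ring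
  rw [this, pow_zero, one_mul, Nat.mul_add_div (by omega), Nat.div_eq_of_lt hf, add_zero]

theorem digits_lt (B : ℕ) (f : ℕ → ℕ) (n : ℕ) (hf : ∀ i < n, f i < B) (_hB : 0 < B) :
    ∑ i ∈ Finset.range n, B ^ i * f i < B ^ n := by
  induction n with
  | zero => simp
  | succ n ih =>
    rw [Finset.sum_range_succ]
    have h1 := ih fun i hi => hf i (by omega)
    have h2 := hf n (by omega)
    have h3 : B ^ n * (f n + 1) ≤ B ^ n * B := Nat.mul_le_mul_left _ h2
    rw [pow_succ]
    nlinarith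

theorem sqDigits_eq (n : ℕ) (f : ℕ → ℕ) (hf : ∀ i, f i < 65536) :
    sqDigits n (∑ i ∈ Finset.range n, 65536 ^ i * f i) = ∑ i ∈ Finset.range n, f i ^ 2 := by
  induction n generalizing f with
  | zero => rfl
  | succ n ih =>
    generalize hS : ∑ i ∈ Finset.range (n + 1), 65536 ^ i * f i = S
    change (S % 65536) ^ 2 + sqDigits n (S / 65536) = _
    rw [← hS, digits_mod _ _ _ (hf 0), digits_div _ _ _ (hf 0), ih _ (fun i => hf (i + 1)),
      Finset.sum_range_succ', add_comm]

theorem sqOuter_succ (n S : ℕ) : sqOuter (n + 1) S =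
    Nat.add (sqDigits 62 (Nat.mod S (Nat.pow 2 992))) (sqOuter n (Nat.div S (Nat.pow 2 992))) :=
  rfl

theorem sqOuter_eq (B : ℕ) (hB : Nat.pow 2 992 = B) (n : ℕ) (f : ℕ → ℕ) (hf : ∀ i, f i < B) :
    sqOuter n (∑ i ∈ Finset.range n, B ^ i * f i) =
      ∑ i ∈ Finset.range n, sqDigits 62 (f i) := by
  induction n generalizing f with
  | zero => rfl
  | succ n ih =>
    generalize hS : ∑ i ∈ Finset.range (n + 1), B ^ i * f i = S
    rw [sqOuter_succ, hB]
    change sqDigits 62 (S % B) + sqOuter n (S / B) = _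
    rw [← hS, digits_mod _ _ _ (hf 0), digits_div _ _ _ (hf 0), ih _ (fun i => hf (i + 1)),
      Finset.sum_range_succ', add_comm]

theorem list_sum_comm (l : List ℕ) (n : ℕ) (F : ℕ → ℕ → ℕ) :
    (l.map fun m => ∑ i ∈ Finset.range n, F m i).sum =
      ∑ i ∈ Finset.range n, (l.map fun m => F m i).sum := by
  induction l with
  | nil => simp
  | cons a l ih => simp [ih, Finset.sum_add_distrib]

theorem list_sum_mul (l : List ℕ) (c : ℕ) (F : ℕ → ℕ) :
    (l.map fun m => c * F m).sum = c * (l.map F).sum := by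
  induction l with
  | nil => simp
  | cons a l ih => simp [ih, mul_add]

/-- Natural number version of `lam`. -/
def lamN (l : List ℕ) (i j : ℕ) : ℕ := (l.map fun m => (m.testBit i && m.testBit j).toNat).sum

theorem lamN_le (l : List ℕ) (i j : ℕ) : lamN l i j ≤ l.length := by
  rw [lamN, ← sum_filter_aux]; exact List.length_filter_le _ _

theorem dot_sp (l : List ℕ) (u w n : ℕ) :
    dot (l.map (sp u n)) (l.map (sp w n)) =
      ∑ i ∈ Finset.range n, (2 ^ w) ^ i * ∑ j ∈ Finset.range n, (2 ^ u) ^ j * lamN l i j := by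
  rw [dot_map]
  have : ∀ m, sp u n m * sp w n m = ∑ i ∈ Finset.range n, (2 ^ w) ^ i *
      ∑ j ∈ Finset.range n, (2 ^ u) ^ j * (m.testBit i && m.testBit j).toNat := by
    intro m
    rw [sp_eq, sp_eq, mul_comm, Finset.sum_mul]
    refine Finset.sum_congr rfl fun i _ => ?_
    rw [mul_assoc, Finset.mul_sum]
    congr 1
    refine Finset.sum_congr rfl fun j _ => ?_
    cases m.testBit i <;> cases m.testBit j <;> simp
  simp only [this]
  rw [list_sum_comm]
  refine Finset.sum_congr rfl fun i _ => ?_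
  rw [list_sum_mul, list_sum_comm]
  congr 1
  refine Finset.sum_congr rfl fun j _ => ?_
  rw [list_sum_mul]; rfl

set_option exponentiation.threshold 2000 in
theorem Checked.Jinv_eq {d : CData} (K : Checked d) (h : chkJ d = true) : Jinv d.code = d.J := by
  simp only [chkJ, Bool.and_eq_true, Nat.beq_eq] at h
  obtain ⟨h1, h2⟩ := h
  have h1' := Nat.le_of_ble_eq_true h1
  rw [Lall_eq d 16 (by norm_num), List.length_map] at h1'
  rw [Lall_eq d 16 (by norm_num), Lall_eq d 992 (by norm_num), dot_sp] at h2
  have hlt : ∀ i j, lamN (LA d ++ LB d) i j < 65536 := fun i j =>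
    lt_of_le_of_lt (lamN_le _ i j) (by omega)
  have e16 : (2 : ℕ) ^ 16 = 65536 := by norm_num
  have e992 : (65536 : ℕ) ^ 62 = 2 ^ 992 := by norm_num
  rw [e16, sqOuter_eq (2 ^ 992) rfl] at h2
  · rw [← h2, Jinv, Finset.sum_range]
    refine Finset.sum_congr rfl fun i _ => ?_
    rw [sqDigits_eq _ _ (hlt i), Finset.sum_range]
    refine Finset.sum_congr rfl fun j _ => ?_
    rw [K.lam_eq]; rfl
  · intro i
    rw [← e992]
    exact digits_lt 65536 _ 62 (fun j _ => hlt i j) (by norm_num)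

/-! ### Invariance under equivalence -/

theorem Jinv_congr {C D : Submodule (ZMod 2) (Fin 62 → ZMod 2)} (h : CodeEquiv C D) :
    Jinv C = Jinv D := by
  obtain ⟨σ, rfl⟩ := h
  let e : (Fin 62 → ZMod 2) ≃ (Fin 62 → ZMod 2) := Equiv.arrowCongr σ.symm (Equiv.refl _)
  have he : ∀ x i, e x i = x (σ i) := fun x i => rfl
  set D := Submodule.map (LinearMap.funLeft (ZMod 2) (ZMod 2) σ) C with hD
  have hmem : ∀ x, e x ∈ D ↔ x ∈ C := by
    intro x
    constructor
    · rintro ⟨y, hy, hxy⟩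
      have : e y = e x := hxy
      rwa [← e.injective this]
    · exact fun hx => ⟨x, hx, rfl⟩
  have hwt : ∀ x, wt (e x) = wt x := by
    intro x
    rw [wt, wt, hammingNorm, hammingNorm]
    refine Finset.card_bij (fun i _ => σ i) ?_ ?_ ?_
    · intro i hi; simpa [he] using hi
    · intro i _ j _ hij; exact σ.injective hij
    · intro j hj; exact ⟨σ.symm j, by simpa [he] using hj, by simp⟩
  have hip : ∀ x y : Fin 62 → ZMod 2, ∑ i, e x i * e y i = ∑ i, x i * y i := by
    intro x y
    exact Equiv.sum_comp σ (fun i => x i * y i)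
  have hsh : ∀ x, e x ∈ shadow D ↔ x ∈ shadow C := by
    intro x
    have h1 : e x ∈ dualSet (evenSub D) ↔ x ∈ dualSet (evenSub C) := by
      constructor
      · intro h y hy
        rw [← hip]
        exact h (e y) ⟨(hmem y).mpr hy.1, by rw [hwt]; exact hy.2⟩
      · intro h y hy
        obtain ⟨z, rfl⟩ := e.surjective y
        rw [hip]
        exact h z ⟨(hmem z).mp hy.1, by rw [← hwt]; exact hy.2⟩
    exact and_congr h1 (not_congr (hmem x))
  have hlam : ∀ i j, lam D i j = lam C (σ i) (σ j) := by
    intro i j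
    rw [lam, lam, ← Set.ncard_image_of_injective
      {x | x ∈ shadow C ∧ wt x = 11 ∧ x (σ i) = 1 ∧ x (σ j) = 1} e.injective]
    congr 1
    ext y
    obtain ⟨x, rfl⟩ := e.surjective y
    rw [e.injective.mem_set_image]
    simp only [Set.mem_ofPred_eq, hsh, hwt, he]
  rw [Jinv, Jinv]
  simp only [hlam]
  rw [← Equiv.sum_comp σ]
  refine Finset.sum_congr rfl fun i _ => ?_
  rw [← Equiv.sum_comp σ]

/-! ### The complete check -/

noncomputable def chkAll (d : CData) : Bool :=
  chkSmall d && (chkC d.g && (chkS d.g d.sL && (chkC d.h && (chkS d.h d.sR && chkJ d))))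

theorem of_chkAll {d : CData} (h : chkAll d = true) :
    (IsSinglyEvenSelfDual d.code ∧ Module.finrank (ZMod 2) d.code = 31 ∧
      minWt d.code = 12 ∧ minWtSet (shadow d.code) = 11) ∧ Jinv d.code = d.J := by
  rw [chkAll, Bool.and_eq_true, Bool.and_eq_true, Bool.and_eq_true, Bool.and_eq_true,
    Bool.and_eq_true] at h
  obtain ⟨h1, h2, h3, h4, h5, h6⟩ := h
  have K : Checked d := ⟨good_of_chk h1, of_chkC h2, of_chkC h4, of_chkS h3, of_chkS h5⟩
  exact ⟨⟨⟨K.selfDual, K.exists_odd⟩, K.finrank, K.minWt_code, K.minWt_shadow⟩, K.Jinv_eq h6⟩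

/-- Generator data of the code number 0. -/
def code0 : CData where
  g := [
    2091304597447507969, 429070011714240514, 858140023428481028, 2504180997612896264,
    2265124204544262160, 81466033432428576, 4083860099246850112, 4376814436912988288,
    3791785284983587072, 1282279258068091392, 1411637011529335808, 4601442641685514240,
    2326381233585524736, 1909524135323639808, 2591240334742667264, 1304851632638427136,
    1456781760670007296, 753452590032879616, 1951846749501128704, 708037719662002176,
    2789762100498530304, 1693462820498178048, 4032152805438390272, 3310682904127864832,
    1076925298873729024, 2951427240090402816, 4473454179699916800, 802730006231908352,
    1853369098201726976, 2628670275184492544, 2305772641543258112]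
  h := [
    2175967705, 4309115499, 8618198231, 17195378806,
    34390757612, 69448264281, 138481409843, 275267277887,
    550524979622, 1100374857932, 2199260625433, 4398521218099,
    8797042403431, 17592628296342, 35185256592684, 70370836017267,
    140739342498509, 281476232507313, 562951716974352, 1125901086975443,
    2251801692781524, 4503601638534530, 9007201332191478, 18014400183695902,
    36028798427746254, 72057595529809463, 144115189375495196, 288230377862007187,
    576460753906575573, 1152921506022797265, 2305843009864882632]
  sL := 4277295311610707968
  sR := 32767
  c12 := 174118682849443857
  s11 := 408737142613753857
  J := 6449448

/-- Generator data of the code number 1. -/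
def code1 : CData where
  g := [
    3041776436235993089, 1340268916508721154, 880566515139608580, 3351868582471401480,
    863709202294505488, 3534636874188455968, 3103071834367590464, 1212645500906373248,
    1775380117552365824, 4013307607778329088, 3922480920757535744, 3879236063285217280,
    2495250562308640768, 3191615948134031360, 1036175400771796992, 1804615654993592320,
    2657713807723397120, 3517163014493175808, 4077382601369976832, 567176332237602816,
    1636301848078974976, 315770773755133952, 1281528976677797888, 1917117543022067712,
    3729270631552778240, 3353290160845357056, 2010302137082314752, 2393810710585933824,
    4285812970761486336, 1152991869592928256, 3458694146150105088]
  h := [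
    2684354559, 4857294617, 9169547562, 17794075981,
    35043177859, 69541299230, 138504542426, 275439722834,
    550351220157, 1100174210147, 2199819651039, 4399111102631,
    8796639580585, 17592733617226, 35184921704332, 70370136079684,
    140738711271475, 281476104899874, 562951371859713, 1125901049662649,
    2251801336914998, 4503601113991895, 9007200801478421, 18014399942585488,
    36028798224767898, 72057595602963056, 144115189545457243, 288230377262771724,
    576460753754972509, 1152921505510100898, 2305843010740895337]
  sL := 3965117610860740608
  sR := 32767
  c12 := 1804615654993592320
  s11 := 1227235762508922885
  J := 6458088

/-- Generator data of the code number 2. -/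
def code2 : CData where
  g := [
    250688176539041793, 501376353078083586, 1002682339559473156, 1453532989425188872,
    1754074107646836752, 1103648228890378272, 1251548176507207744, 1350104481810874496,
    1547287459014902016, 1941653413422957056, 728394552532009984, 2001935766208382976,
    607805569658523648, 2243205910543474688, 125379271567884288, 2577263284948336640,
    2848683560682979328, 3391524112152264704, 3593303419475197952, 3727771958533160960,
    3996709036649086976, 4534583192880939008, 2460063563851497472, 2614213751892606976,
    2922584494571520000, 4531173429113520128, 2466965943578787840, 2628018511347187712,
    2950194013480681472, 4475983909464571904, 2305772641543258112]
  h := [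
    2897790205, 4721838587, 9443677174, 17813645292,
    34553581528, 69107130289, 138214260578, 275354812100,
    550709591433, 1100345441043, 2199617140263, 4398160538703,
    8796321044639, 17592642056511, 35185284113022, 70370459974760,
    140739280176313, 281476920669466, 562951060199005, 1125901613191378,
    2251801645374925, 4503601709729779, 9007200839693199, 18014400031267703,
    36028798414473862, 72057595113761125, 144115189795237539, 288230377941836078,
    576460754235047476, 1152921506254957528, 2305843010287403008]
  sL := 70366596694016
  sR := 32767
  c12 := 2765649993304899589
  s11 := 1307385302565781569
  J := 6458568

/-- Generator data of the code number 3. -/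
def code3 : CData where
  g := [
    332315028579418113, 664630057158836226, 3282555717348753412, 352536488375746568,
    705002610154799120, 3201734186708762656, 514097066956292160, 1028123767315890304,
    2555443407975612672, 2805043806737531392, 3304244604261368832, 309008860994078720,
    618017721988157440, 3375667481589850112, 166157514289725440, 1989010062131101696,
    4092439704442568704, 2191362361040961536, 3687692635839135744, 3916620757857730560,
    4374406635298226176, 1627425991072677888, 2101930477538508800, 3866583564233474048,
    4274402614646407168, 1827605000054898688, 4415333176864407552, 1545671746139455488,
    1938421987672064000, 4193644063779454976, 3458694146150105088]
  h := [
    2920358332, 4767007608, 9533982449, 17994255842,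
    34914802628, 68755896200, 137511792400, 275023552033,
    550047071299, 1100094142598, 2199114543373, 4398229053979,
    8796458075191, 17592916117615, 35184758526174, 70370600675692,
    140739432954805, 281476209253894, 562952038634848, 1125901353108397,
    2251800934608439, 4503601426248963, 9007201282032490, 18014400104067000,
    36028798372787741, 72057595376207190, 144115189974754240, 288230377443176173,
    576460754305397942, 1152921505680556032, 2305843010918491940]
  sL := 70366596694016
  sR := 32767
  c12 := 3463928645125406737
  s11 := 781374685672636545
  J := 6459768

/-- Generator data of the code number 4. -/
def code4 : CData where
  g := [
    3267369488231694337, 3841516030551654402, 4224267547282767876, 3080736919949148168,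
    4214933640603238416, 3099434911895912480, 4177457280691732544, 3174297246279663744,
    4027762940835791104, 4596691001254347264, 2335947884542821376, 2365982393275254784,
    2426051410740121600, 2546259812266549248, 2786606248722710528, 1805846882530918400,
    1000028195799498752, 1458709642640228352, 1764427414076915712, 1082766911794053120,
    1293172502017605632, 1433423499428364288, 1713925494249881600, 2274929483892916224,
    61881203770261504, 123762407540523008, 247454448484352000, 494838530372009984,
    989677060744019968, 1479384194105737216, 2305772641543258112]
  h := [
    2365939312, 4731845857, 9463691714, 17853641605,
    34633541387, 69267050007, 137460358191, 274920716382,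
    549841432764, 1099682832761, 2199365632755, 4398731232743,
    8796388756430, 17592777512860, 35184481316664, 70370373338618,
    140739152285198, 281476708997606, 562951825831478, 1125902023846294,
    2251801378608855, 4503601163937877, 9007200701207888, 18014399809007451,
    36028799098379084, 72057595497132899, 144115189366154044, 288230378178298755,
    576460753654874877, 1152921506233615190, 2305843009213726719]
  sL := 70366596694016
  sR := 1073709056
  c12 := 2923999467236622337
  s11 := 234310466048884741
  J := 6462408

/-- Generator data of the code number 5. -/
def code5 : CData where
  g := [
    4099828018854232065, 2764755482345209858, 348499957851881476, 127957265557749768,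
    857818246626148368, 1178341674422632480, 1791934343145324608, 2749851804094169216,
    303999002834108672, 7511006594990592, 2909189301159855104, 3975109796440311808,
    1602719245387436032, 1447525322315538432, 3478910906178486272, 606479406164115456,
    3981271876214259712, 3956982457470943232, 3872718437528895488, 1375722132075970560,
    2181345533087449088, 3107059715798990848, 1272801822175657984, 4267467649056768000,
    2443004475602894848, 3144694027459231744, 1215267307924750336, 4165869699579510784,
    303239704424218624, 2305913374199775232, 2305772641543258112]
  h := [
    2684354559, 5316892036, 9575891314, 18096302239,
    35134241605, 69268546319, 138472657818, 275820350799,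
    550616674533, 1100141415345, 2199962403559, 4398799564724,
    8796716665580, 17593103630428, 35185151486658, 70370176600226,
    140738568185369, 281476416947345, 562951047020158, 1125901370422367,
    2251800969650146, 4503601182160742, 9007200660265361, 18014399802623103,
    36028798348951645, 72057595311753240, 144115189195413650, 288230377495411078,
    576460753556505681, 1152921505896560737, 2305843009946078339]
  sL := 1718577057643888640
  sR := 32767
  c12 := 622078205544644609
  s11 := 1442568401783357441
  J := 6463368

/-- Generator data of the code number 6. -/
def code6 : CData where
  g := [
    4307091642931740673, 4364964111042215938, 4259232888924405764, 4408855580135915528,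
    4063363267622338576, 1593669289733259296, 4097358915170205760, 3712169761832960128,
    3965575009845379328, 1942765958128992768, 4184950922733945856, 3898683144773044224,
    1294562362023481344, 1930808683277590528, 2202248387296772096, 2659109208238096384,
    948314268409856000, 93133236930215936, 842233755929411584, 386558116181311488,
    3341007550778703872, 3352494090773069824, 853098180651253760, 915758192976199680,
    817368951171317760, 329602516247379968, 3297403245411958784, 3006239990779740160,
    905046160400449536, 2801658295008362496, 3458694146150105088]
  h := [
    2161631851, 4323230935, 8646429103, 17220497717,
    34623707870, 69183002582, 138304474566, 275620373304,
    550145465518, 1100227074871, 2199529000666, 4398996389855,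
    8797141640545, 17593099186807, 35185038351450, 70370823130303,
    140738684939637, 281476882625599, 562951419526686, 1125901282104041,
    2251801291876716, 4503600900087398, 9007201008325144, 18014400209924689,
    36028799147897539, 72057595334955405, 144115189710876581, 288230378143598890,
    576460753879787103, 1152921504606879743, 2305843011028815327]
  sL := 3320535801762152448
  sR := 62053926
  c12 := 2381913008944193537
  s11 := 1443129940831634432
  J := 6467688

/-- Generator data of the code number 7. -/
def code7 : CData where
  g := [
    1487753817813417985, 3377495750383501314, 3879053832117813252, 2249680397648527368,
    2488655970738110480, 3896947877053726752, 1782114091549065280, 656690696295547008,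
    1896498646271131904, 2291913601344078336, 573822600854111232, 2083770928457582592,
    3902885010062970880, 848871808273752064, 2298030706367938560, 4004938193987207168,
    3183630998340435968, 550229759234277376, 4094326255942631424, 962217494159294464,
    133167191885348864, 3757782909371547648, 1141875091391381504, 2327871385382158336,
    1659826539321098240, 943377980925673472, 2724918073751502848, 2032762844717514752,
    2635289360685072384, 988248584954576896, 3458694146150105088]
  h := [
    2339237302, 4525045467, 9430436473, 17551793803,
    35103587606, 69555756515, 137735188927, 275470377854,
    550640372868, 1099971629936, 2199790537558, 4398885630306,
    8796464113852, 17592928194937, 35185195009340, 70370856972378,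
    140739355293473, 281476219550167, 562951877242434, 1125901695837863,
    2251800918432474, 4503601747363310, 9007201001888841, 18014399664779014,
    36028798970818135, 72057595771938444, 144115189170763578, 288230378289487407,
    576460754086882250, 1152921504760257389, 2305843010633830454]
  sL := 2964675401688809472
  sR := 32767
  c12 := 2327871385382158336
  s11 := 363141290910613504
  J := 6470568

/-- Generator data of the code number 8. -/
def code8 : CData where
  g := [
    3759473951810519041, 3276392179433474, 2818521734087442436, 662288662179872776,
    2696487548405940240, 3859193450222059552, 238197556943781952, 1856986547023249536,
    3159704285290168576, 52087926699328000, 104175853398656000, 2142903623724566528,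
    2533580903452512256, 4110385033435422720, 3609119232815546368, 2813097357896351744,
    657071883233067008, 2681550425244696576, 965932937222815744, 778979554210873344,
    4453447717310431232, 2648872550974619648, 1049196010745626624, 3840960225284718592,
    2720878184512880640, 3135913359812067328, 2258847374048755712, 2211886923255906304,
    161407585671446528, 322815171342893056, 1705902015374163968]
  h := [
    2161611614, 4323223228, 8646446456, 17220471215,
    35797350882, 70847056422, 138190241521, 276380483042,
    551478510119, 1099985301235, 2199970602470, 4399941172173,
    8796972535416, 17593945038065, 35184781934670, 70369563836573,
    140739127673146, 281475360242582, 562950648620146, 1125901297207525,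
    2251801774111607, 4503600634220300, 9007201268407833, 18014399142561232,
    36028798285122464, 72057595239054844, 144115189657686340, 288230377996585013,
    576460752544409992, 1152921505891379361, 2305843009275752757]
  sL := 1152886320234758144
  sR := 32767
  c12 := 2813097357896351744
  s11 := 873743512915410948
  J := 6472968

/-- Generator data of the code number 9. -/
def code9 : CData where
  g := [
    847726379150606337, 1772823156017332226, 2173538223140110340, 238350990355464200,
    2773947008711393296, 872726090995466272, 514615926922936384, 3362516691161448576,
    2470578221461012736, 319786830167802368, 2883050525333390336, 4546505124444375040,
    2390844795015663616, 1349137396909744128, 3859775471977775104, 2369632239303557120,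
    83211149511819264, 3651751045983502336, 412537297465245696, 4292388874661396480,
    2899862861282017280, 4567182016132415488, 2440642827693064192, 1395886604106596352,
    2764294245824069632, 2043400546601140224, 1705285392355295232, 3437979374060568576,
    3490694351086944256, 1152991869592928256, 3458694146150105088]
  h := [
    2684354559, 4899063796, 9328314397, 18186819535,
    34963134356, 69322402012, 138040743501, 275477490542,
    550350917929, 1100097840550, 2199591619769, 4398713462406,
    8796822895353, 17593041728007, 35185412234245, 70370160810318,
    140738619757613, 281476363923733, 562951275775131, 1125901145411704,
    2251801018907070, 4503601168542258, 9007200801895124, 18014399916704537,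
    36028798299201667, 72057595328550985, 144115189378853341, 288230377479490292,
    576460753548610727, 1152921505523984390, 2305843010714918288]
  sL := 4248243195042856960
  sR := 32767
  c12 := 83211149511819264
  s11 := 3463496891323449345
  J := 6475608

set_option maxRecDepth 100000

theorem chk0 : chkAll code0 = true := by decide +kernel

theorem chk1 : chkAll code1 = true := by decide +kernel

theorem chk2 : chkAll code2 = true := by decide +kernel

theorem chk3 : chkAll code3 = true := by decide +kernel

theorem chk4 : chkAll code4 = true := by decide +kernel

theorem chk5 : chkAll code5 = true := by decide +kernel

theorem chk6 : chkAll code6 = true := by decide +kernel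

theorem chk7 : chkAll code7 = true := by decide +kernel

theorem chk8 : chkAll code8 = true := by decide +kernel

theorem chk9 : chkAll code9 = true := by decide +kernel

theorem of_chkAll_pair {c d : CData} (hc : chkAll c = true) (hd : chkAll d = true)
    (h : c.J ≠ d.J) : ¬ CodeEquiv c.code d.code := fun e =>
  h ((of_chkAll hc).2.symm.trans ((Jinv_congr e).trans (of_chkAll hd).2))

/-- The ten codes. -/
def codes : Fin 10 → CData :=
  ![code0, code1, code2, code3, code4, code5, code6, code7, code8, code9]

theorem chk_codes (i : Fin 10) : chkAll (codes i) = true := by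
  fin_cases i
  · exact chk0
  · exact chk1
  · exact chk2
  · exact chk3
  · exact chk4
  · exact chk5
  · exact chk6
  · exact chk7
  · exact chk8
  · exact chk9

theorem codes_J : ∀ i j : Fin 10, i ≠ j → (codes i).J ≠ (codes j).J := by decide +kernel

/-- There exist at least 10 pairwise inequivalent s-extremal singly even self-dual
`[62, 31, 12]` codes: singly even self-dual codes of length 62 with minimum weight 12
whose shadows have minimum weight 11. -/
theorem exists_10_sExtremal_62 :
    ∃ f : Fin 10 → Submodule (ZMod 2) (Fin 62 → ZMod 2),
      (∀ i, IsSinglyEvenSelfDual (f i) ∧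
        Module.finrank (ZMod 2) (f i) = 31 ∧
        minWt (f i) = 12 ∧
        minWtSet (shadow (f i)) = 11) ∧
      ∀ i j, i ≠ j → ¬ CodeEquiv (f i) (f j) := by
  refine ⟨fun i => (codes i).code, fun i => (of_chkAll (chk_codes i)).1, fun i j hij => ?_⟩
  exact of_chkAll_pair (chk_codes i) (chk_codes j) (codes_J i j hij)
end

section
/- If there exists an s-extremal singly even self-dual [n, n/2, 10] code, then 46 ≤ n ≤ 70; and if there exists an s-extremal singly even self-dual [n, n/2, 14] code, then 70 ≤ n ≤ 94. -/
open Finset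

/-- Sign character of `ZMod 2`. -/
def sg (a : ZMod 2) : ℤ := if a = 0 then 1 else -1

lemma sg_add : ∀ a b : ZMod 2, sg (a + b) = sg a * sg b := by decide

lemma sg_sq : ∀ a : ZMod 2, sg a * sg a = 1 := by decide

lemma sg_val : ∀ a : ZMod 2, sg a = 1 - 2 * (a.val : ℤ) := by decide

lemma val_add_two : ∀ a b : ZMod 2,
    (a + b).val + 2 * (a.val * b.val) = a.val + b.val := by decide

lemma sg_sum {ι : Type*} (T : Finset ι) (f : ι → ZMod 2) :
    sg (∑ i ∈ T, f i) = ∏ i ∈ T, sg (f i) := by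
  classical
  induction T using Finset.induction_on with
  | empty => simp [sg]
  | insert a s ha ih => rw [Finset.sum_insert ha, Finset.prod_insert ha, sg_add, ih]

lemma wt_eq_sum {n : ℕ} (x : Fin n → ZMod 2) : wt x = ∑ i, (x i).val := by
  unfold wt hammingNorm
  rw [Finset.card_filter]
  refine Finset.sum_congr rfl fun i _ => ?_
  have : ∀ a : ZMod 2, (if a ≠ 0 then 1 else 0) = a.val := by decide
  exact this (x i)

lemma wt_add {n : ℕ} (a b : Fin n → ZMod 2) :
    wt (a + b) + 2 * (∑ i, (a i).val * (b i).val) = wt a + wt b := by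
  simp only [wt_eq_sum, Finset.mul_sum, ← Finset.sum_add_distrib]
  exact Finset.sum_congr rfl fun i _ => by simpa using val_add_two (a i) (b i)

lemma dot_cast {n : ℕ} (a b : Fin n → ZMod 2) :
    ((∑ i, (a i).val * (b i).val : ℕ) : ZMod 2) = ∑ i, a i * b i := by
  push_cast
  exact Finset.sum_congr rfl fun i _ => by simp

lemma dot_zero_iff {n : ℕ} (a b : Fin n → ZMod 2) :
    ∑ i, a i * b i = 0 ↔ 2 ∣ ∑ i, (a i).val * (b i).val := by
  rw [← dot_cast, ZMod.natCast_eq_zero_iff]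

lemma dot_self {n : ℕ} (a : Fin n → ZMod 2) : ∑ i, a i * a i = ((wt a : ℕ) : ZMod 2) := by
  rw [wt_eq_sum]
  push_cast
  refine Finset.sum_congr rfl fun i _ => ?_
  generalize a i = a
  revert a; decide

lemma add_self_vec {n : ℕ} (a : Fin n → ZMod 2) : a + a = 0 := by
  ext i
  simp only [Pi.add_apply, Pi.zero_apply]
  generalize a i = a
  revert a; decide

/-- Elementary symmetric sum of the signs of `z` (a Krawtchouk polynomial of its weight). -/
def es {n : ℕ} (k : ℕ) (z : Fin n → ZMod 2) : ℤ :=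
  ∑ T ∈ Finset.powersetCard k (Finset.univ : Finset (Fin n)), ∏ i ∈ T, sg (z i)

open Polynomial in
/-- Generating polynomial of `es`. -/
noncomputable def gen {n : ℕ} (z : Fin n → ZMod 2) : ℤ[X] :=
  ∏ i, (1 + C (sg (z i)) * X)

open Polynomial in
lemma gen_coeff {n : ℕ} (z : Fin n → ZMod 2) (k : ℕ) : (gen z).coeff k = es k z := by
  unfold gen es
  rw [Finset.prod_one_add, Polynomial.finsetSum_coeff]
  have h : ∀ T : Finset (Fin n), (∏ i ∈ T, (C (sg (z i)) * X : ℤ[X])).coeff k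
      = if T.card = k then ∏ i ∈ T, sg (z i) else 0 := by
    intro T
    rw [Finset.prod_mul_distrib, Finset.prod_const, ← map_prod, coeff_C_mul_X_pow]
    simp [eq_comm]
  simp only [h]
  rw [← Finset.sum_filter, Finset.powersetCard_eq_filter]

/-- `n - 2 wt z`. -/
def dev {n : ℕ} (z : Fin n → ZMod 2) : ℤ := ∑ i, sg (z i)

lemma dev_eq {n : ℕ} (z : Fin n → ZMod 2) : dev z = n - 2 * (wt z : ℤ) := by
  unfold dev
  rw [wt_eq_sum]
  simp only [sg_val, Finset.sum_sub_distrib, ← Finset.mul_sum]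
  simp

open Polynomial in
lemma gen_deriv {n : ℕ} (z : Fin n → ZMod 2) :
    (1 - X ^ 2) * derivative (gen z) = (C (dev z) - C (n : ℤ) * X) * gen z := by
  unfold gen dev
  rw [derivative_prod_finset, Finset.mul_sum]
  have h : (C (∑ i, sg (z i)) - C (n : ℤ) * X : ℤ[X]) = ∑ i : Fin n, (C (sg (z i)) - X) := by
    rw [Finset.sum_sub_distrib]; simp
  rw [h, Finset.sum_mul]
  refine Finset.sum_congr rfl fun i _ => ?_
  rw [← Finset.mul_prod_erase _ _ (Finset.mem_univ i)]
  have h2 : (C (sg (z i)) * C (sg (z i)) : ℤ[X]) = 1 := by rw [← C_mul, sg_sq]; simp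
  simp only [derivative_add, derivative_one, derivative_mul, derivative_C, derivative_X]
  linear_combination (-(X * ∏ j ∈ Finset.univ.erase i, (1 + C (sg (z j)) * X))) * h2

/-- Krawtchouk-type polynomials, normalised to be monic. -/
def KP (n : ℤ) (x : ℤ) : ℕ → ℤ
  | 0 => 1
  | 1 => x
  | (k + 2) => x * KP n x (k + 1) - (k + 1) * (n - k) * KP n x k

open Polynomial in
lemma es_rec {n : ℕ} (z : Fin n → ZMod 2) (k : ℕ) :
    ((k : ℤ) + 2) * es (k + 2) z = dev z * es (k + 1) z - (n - k) * es k z := by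
  have h := congrArg (fun p => p.coeff (k + 1)) (gen_deriv z)
  simp only [sub_mul, one_mul, coeff_sub, mul_assoc, coeff_C_mul, coeff_X_mul, gen_coeff,
    coeff_derivative] at h
  rcases k with _ | k
  · rw [show (X ^ 2 : ℤ[X]) = X * X by ring, mul_assoc, coeff_X_mul, coeff_X_mul_zero] at h
    push_cast at h ⊢
    linarith
  · rw [coeff_X_pow_mul', if_pos (by omega), coeff_derivative, gen_coeff] at h
    simp only [show k + 1 + 1 - 2 = k by omega] at h
    push_cast at h ⊢
    linarith

lemma es_KP {n : ℕ} (z : Fin n → ZMod 2) : ∀ k : ℕ,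
    (Nat.factorial k : ℤ) * es k z = KP n (dev z) k := by
  have h0 : es 0 z = 1 := by simp [es]
  have h1 : es 1 z = dev z := by
    simp [es, dev, Finset.powersetCard_one]
  intro k
  induction k using Nat.twoStepInduction with
  | zero => simp [h0, KP]
  | one => simp [h1, KP]
  | more k ih1 ih2 =>
    rw [KP, ← ih1, ← ih2]
    have := es_rec z k
    have e2 : ((k + 2).factorial : ℤ) = (k + 2) * ((k + 1) * k.factorial) := by
      rw [Nat.factorial_succ, Nat.factorial_succ]; push_cast; ring
    have e1 : ((k + 1).factorial : ℤ) = (k + 1) * k.factorial := by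
      rw [Nat.factorial_succ]; push_cast; ring
    rw [e2, e1]
    linear_combination ((k : ℤ) + 1) * k.factorial * this

lemma KP_even (n x : ℤ) (k : ℕ) : KP n (-x) k = (-1) ^ k * KP n x k := by
  induction k using Nat.twoStepInduction with
  | zero => simp [KP]
  | one => simp [KP]
  | more k ih1 ih2 => rw [KP, KP, ih1, ih2]; ring

/-- Indicator vector of a set of coordinates. -/
def ind {n : ℕ} (T : Finset (Fin n)) : Fin n → ZMod 2 := fun i => if i ∈ T then 1 else 0

lemma wt_ind {n : ℕ} (T : Finset (Fin n)) : wt (ind T) = T.card := by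
  simp [wt, hammingNorm, ind]

lemma dot_ind {n : ℕ} (T : Finset (Fin n)) (c : Fin n → ZMod 2) :
    ∑ i, ind T i * c i = ∑ i ∈ T, c i := by
  simp [ind]

lemma char_sum_zero {n : ℕ} (C : Submodule (ZMod 2) (Fin n → ZMod 2)) [Fintype C]
    (hC : IsSelfDual C) (T : Finset (Fin n)) (hT : ind T ∉ C) :
    ∑ c : C, ∏ i ∈ T, sg ((c : Fin n → ZMod 2) i) = 0 := by
  have h1 : ind T ∉ dualSet (C : Set (Fin n → ZMod 2)) := by
    rw [← hC]; exact hT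
  simp only [dualSet, Set.mem_ofPred_eq, not_forall] at h1
  obtain ⟨y, hy, hy2⟩ := h1
  rw [dot_ind] at hy2
  have hs : ∏ i ∈ T, sg (y i) = -1 := by rw [← sg_sum]; simp [sg, hy2]
  have h2 := Equiv.sum_comp (Equiv.addRight (⟨y, hy⟩ : C))
    (fun c : C => ∏ i ∈ T, sg ((c : Fin n → ZMod 2) i))
  simp only [Equiv.coe_addRight, Submodule.coe_add, Pi.add_apply, sg_add,
    Finset.prod_mul_distrib, hs] at h2
  rw [← Finset.sum_mul] at h2
  linarith

lemma char_sum_one {n : ℕ} (C : Submodule (ZMod 2) (Fin n → ZMod 2)) [Fintype C]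
    (hC : IsSelfDual C) (T : Finset (Fin n)) (hT : ind T ∈ C) :
    ∑ c : C, ∏ i ∈ T, sg ((c : Fin n → ZMod 2) i) = Fintype.card C := by
  have h1 : ind T ∈ dualSet (C : Set (Fin n → ZMod 2)) := by
    rw [← hC]; exact hT
  have : ∀ c : C, ∏ i ∈ T, sg ((c : Fin n → ZMod 2) i) = 1 := by
    intro c
    rw [← sg_sum, ← dot_ind, h1 c c.2]; simp [sg]
  simp [this]

lemma sum_es {n : ℕ} (C : Submodule (ZMod 2) (Fin n → ZMod 2)) [Fintype C]
    (u : Fin n → ZMod 2) (k : ℕ) :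
    ∑ c : C, es k (u + (c : Fin n → ZMod 2)) = ∑ T ∈ Finset.powersetCard k (Finset.univ : Finset (Fin n)),
      sg (∑ i, u i * ind T i) * ∑ c : C, ∏ i ∈ T, sg ((c : Fin n → ZMod 2) i) := by
  unfold es
  rw [Finset.sum_comm]
  refine Finset.sum_congr rfl fun T _ => ?_
  have : ∑ i, u i * ind T i = ∑ i ∈ T, u i := by simp [ind]
  rw [this, sg_sum, Finset.mul_sum]
  refine Finset.sum_congr rfl fun c _ => ?_
  rw [← Finset.prod_mul_distrib]
  exact Finset.prod_congr rfl fun i _ => by simp [sg_add]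

lemma wt_even {n : ℕ} {C : Submodule (ZMod 2) (Fin n → ZMod 2)} (hC : IsSelfDual C)
    {c : Fin n → ZMod 2} (hc : c ∈ C) : 2 ∣ wt c := by
  have h1 : c ∈ dualSet (C : Set (Fin n → ZMod 2)) := by rw [← hC]; exact hc
  have := h1 c hc
  rwa [dot_self, ZMod.natCast_eq_zero_iff] at this

lemma ones_mem {n : ℕ} {C : Submodule (ZMod 2) (Fin n → ZMod 2)} (hC : IsSelfDual C) :
    ind (Finset.univ : Finset (Fin n)) ∈ C := by
  have : ind (Finset.univ : Finset (Fin n)) ∈ dualSet (C : Set (Fin n → ZMod 2)) := by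
    intro y hy
    have h := (ZMod.natCast_eq_zero_iff _ _).2 (wt_even hC hy)
    rw [← dot_self] at h
    rw [← h]
    refine Finset.sum_congr rfl fun i _ => ?_
    simp only [ind, Finset.mem_univ, if_true]
    generalize y i = a
    revert a; decide
  rw [← hC] at this
  exact this

lemma dot_mem {n : ℕ} {C : Submodule (ZMod 2) (Fin n → ZMod 2)} (hC : IsSelfDual C)
    {c c' : Fin n → ZMod 2} (hc : c ∈ C) (hc' : c' ∈ C) : ∑ i, c i * c' i = 0 := by
  have h1 : c ∈ dualSet (C : Set (Fin n → ZMod 2)) := by rw [← hC]; exact hc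
  exact h1 c' hc'

lemma wt_add_mem {n : ℕ} {C : Submodule (ZMod 2) (Fin n → ZMod 2)} (hC : IsSelfDual C)
    {c c' : Fin n → ZMod 2} (hc : c ∈ C) (hc' : c' ∈ C) :
    wt (c + c') % 4 = (wt c + wt c') % 4 := by
  have h1 := (dot_zero_iff c c').1 (dot_mem hC hc hc')
  have h2 := wt_add c c'
  omega

/-- Inner products of shadow vectors with codewords. -/
lemma shadow_dot {n : ℕ} {C : Submodule (ZMod 2) (Fin n → ZMod 2)} (hC : IsSelfDual C)
    {u c : Fin n → ZMod 2} (hu : u ∈ shadow C) (hc : c ∈ C) :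
    ∑ i, u i * c i = 0 ↔ 4 ∣ wt c := by
  obtain ⟨hu1, hu2⟩ := hu
  constructor
  · intro h
    by_contra h4
    apply hu2
    rw [hC]
    intro y hy
    by_cases hy4 : 4 ∣ wt y
    · exact hu1 y ⟨hy, hy4⟩
    · have e1 := wt_even hC hc
      have e2 := wt_even hC hy
      have e3 := wt_add_mem hC hc hy
      have h5 := hu1 (c + y) ⟨C.add_mem hc hy, by omega⟩
      simp only [Pi.add_apply, mul_add, Finset.sum_add_distrib, h, zero_add] at h5
      exact h5
  · intro h4
    exact hu1 c ⟨hc, h4⟩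

lemma shadow_add {n : ℕ} {C : Submodule (ZMod 2) (Fin n → ZMod 2)} (hC : IsSelfDual C)
    {u c : Fin n → ZMod 2} (hu : u ∈ shadow C) (hc : c ∈ C) : u + c ∈ shadow C := by
  refine ⟨?_, ?_⟩
  · intro y hy
    simp only [Pi.add_apply, add_mul, Finset.sum_add_distrib, hu.1 y hy, dot_mem hC hc hy.1,
      add_zero]
  · intro h
    apply hu.2
    have := C.sub_mem h hc
    simpa using this

lemma shadow_wt {n : ℕ} {C : Submodule (ZMod 2) (Fin n → ZMod 2)} (hC : IsSelfDual C)
    {u c : Fin n → ZMod 2} (hu : u ∈ shadow C) (hc : c ∈ C) :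
    wt (u + c) % 4 = wt u % 4 := by
  have h1 := shadow_dot hC hu hc
  rw [dot_zero_iff] at h1
  have h2 := wt_add u c
  have h3 := wt_even hC hc
  by_cases h : 4 ∣ wt c
  · have := h1.2 h; omega
  · have := mt h1.1 h; omega

lemma shadow_nonempty {n : ℕ} {C : Submodule (ZMod 2) (Fin n → ZMod 2)} (hC : IsSelfDual C)
    (h4 : ∃ x ∈ C, ¬ (4 ∣ wt x)) : (shadow C).Nonempty := by
  classical
  let φ : C →ₗ[ZMod 2] ZMod 2 :=
    AddMonoidHom.toZModLinearMap 2
      { toFun := fun c => ((wt (c : Fin n → ZMod 2) / 2 : ℕ) : ZMod 2)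
        map_zero' := by simp [wt]
        map_add' := by
          intro a b
          rw [← Nat.cast_add, ZMod.natCast_eq_natCast_iff]
          have h1 := wt_add_mem hC a.2 b.2
          have h2 := wt_even hC a.2
          have h3 := wt_even hC b.2
          have h5 := wt_even hC (a + b).2
          simp only [Submodule.coe_add] at h5 ⊢
          unfold Nat.ModEq
          omega }
  obtain ⟨ψ, hψ⟩ := LinearMap.exists_extend φ
  have hval : ∀ c ∈ C, ∑ i, ψ (Pi.single i 1) * c i = ((wt c / 2 : ℕ) : ZMod 2) := by
    intro c hc
    have e : ψ c = ((wt c / 2 : ℕ) : ZMod 2) := by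
      have := LinearMap.congr_fun hψ ⟨c, hc⟩
      exact this
    rw [← e, LinearMap.pi_apply_eq_sum_univ ψ c]
    refine Finset.sum_congr rfl fun i _ => ?_
    rw [smul_eq_mul, mul_comm]
    congr 2
    ext j
    simp [Pi.single_apply, eq_comm]
  refine ⟨fun i => ψ (Pi.single i 1), ?_, ?_⟩
  · intro c hc
    rw [hval c hc.1, ZMod.natCast_eq_zero_iff]
    have := hc.2
    omega
  · intro hmem
    obtain ⟨x, hx, hx4⟩ := h4
    have h1 := hval x hx
    rw [dot_mem hC hmem hx] at h1
    have h2 := (ZMod.natCast_eq_zero_iff _ _).1 h1.symm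
    have := wt_even hC hx
    omega

lemma core {n : ℕ} (C : Submodule (ZMod 2) (Fin n → ZMod 2)) [Fintype C] (d : ℕ)
    (hE : IsSExtremal C) (hd : minWt C = d) :
    2 ∣ n ∧ 2 * d ≤ n / 2 + 4 ∧ ∃ x : C → ℤ,
      (∀ c, 8 ∣ x c - (4 * d - 8)) ∧ (∀ c, x c ≤ 4 * d - 8 ∧ -(4 * (d : ℤ) - 8) ≤ x c) ∧
      (∀ k, 0 < k → k < d → ∑ c, KP n (x c) k = 0) ∧
      (∀ k, k % 4 = 0 → 0 ≤ ∑ c, KP n (x c) k) ∧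
      (∀ k, k % 4 = 2 → ∑ c, KP n (x c) k ≤ 0) := by
  obtain ⟨⟨hC, h4⟩, hs⟩ := hE
  have hn : 2 ∣ n := by
    have := wt_even hC (ones_mem hC)
    rwa [wt_ind, Finset.card_univ, Fintype.card_fin] at this
  rw [hd] at hs
  refine ⟨hn, by omega, ?_⟩
  obtain ⟨v, hv⟩ := shadow_nonempty hC h4
  have hne0 : ∀ z ∈ shadow C, z ≠ 0 := by
    rintro z hz rfl
    exact hz.2 C.zero_mem
  have hset : {w | ∃ x ∈ shadow C, x ≠ 0 ∧ wt x = w}.Nonempty := ⟨wt v, v, hv, hne0 v hv, rfl⟩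
  obtain ⟨u, hu, -, huw⟩ := Nat.sInf_mem hset
  have hmin : ∀ z ∈ shadow C, minWtSet (shadow C) ≤ wt z := fun z hz =>
    Nat.sInf_le ⟨z, hz, hne0 z hz, rfl⟩
  change wt u = minWtSet (shadow C) at huw
  have hdmin : ∀ c ∈ C, c ≠ 0 → d ≤ wt c := by
    intro c hc h0
    rw [← hd]
    exact Nat.sInf_le ⟨c, hc, h0, rfl⟩
  have hKP : ∀ k, ∑ c : C, KP n (dev (u + (c : Fin n → ZMod 2))) k = (k.factorial : ℤ) * ∑ c : C, es k (u + (c : Fin n → ZMod 2)) := by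
    intro k
    rw [Finset.mul_sum]
    exact Finset.sum_congr rfl fun c _ => (es_KP _ _).symm
  refine ⟨fun c => dev (u + (c : Fin n → ZMod 2)), ?_, ?_, ?_, ?_, ?_⟩
  · intro c
    have := shadow_wt hC hu c.2
    simp only [dev_eq]
    omega
  · intro c
    have hz := shadow_add hC hu c.2
    have h1 := hmin _ hz
    have h2 := hmin _ (shadow_add hC hz (ones_mem hC))
    have h3 := wt_add (u + (c : Fin n → ZMod 2)) (ind Finset.univ)
    have h6 : ∑ i, ((u + (c : Fin n → ZMod 2)) i).val * (ind (Finset.univ : Finset (Fin n)) i).val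
        = wt (u + (c : Fin n → ZMod 2)) := by
      rw [wt_eq_sum]
      exact Finset.sum_congr rfl fun i _ => by simp [ind, ZMod.val_one]
    rw [h6, wt_ind, Finset.card_univ, Fintype.card_fin] at h3
    simp only [dev_eq]
    omega
  · intro k hk hkd
    rw [hKP, sum_es, Finset.sum_eq_zero, mul_zero]
    intro T hT
    rw [Finset.mem_powersetCard] at hT
    rw [char_sum_zero C hC T, mul_zero]
    intro hmem
    have h0 : ind T ≠ 0 := by
      intro h
      have h7 := wt_ind T
      rw [h, hT.2] at h7
      simp [wt] at h7
      omega
    have := hdmin _ hmem h0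
    rw [wt_ind, hT.2] at this
    omega
  · intro k hk
    rw [hKP, sum_es]
    refine mul_nonneg (by positivity) (Finset.sum_nonneg fun T hT => ?_)
    rw [Finset.mem_powersetCard] at hT
    by_cases hmem : ind T ∈ C
    · rw [char_sum_one C hC T hmem, (shadow_dot hC hu hmem).2 (by rw [wt_ind, hT.2]; omega)]
      simp [sg]
    · rw [char_sum_zero C hC T hmem, mul_zero]
  · intro k hk
    rw [hKP, sum_es]
    refine mul_nonpos_of_nonneg_of_nonpos (by positivity) (Finset.sum_nonpos fun T hT => ?_)
    rw [Finset.mem_powersetCard] at hT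
    by_cases hmem : ind T ∈ C
    · have := mt (shadow_dot hC hu hmem).1 (by rw [wt_ind, hT.2]; omega)
      rw [char_sum_one C hC T hmem]
      simp [sg, this]
    · rw [char_sum_zero C hC T hmem, mul_zero]

/-- Evaluate an even sum through the multiplicities of the values `± 8 j`. -/
lemma sum_even {ι : Type*} [Fintype ι] (J : ℕ) (x : ι → ℤ) (hx8 : ∀ c, 8 ∣ x c)
    (hxJ : ∀ c, x c ≤ 8 * J ∧ -(8 * (J : ℤ)) ≤ x c) :
    ∃ b : ℕ → ℤ, (∀ j, 0 ≤ b j) ∧ ∀ f : ℤ → ℤ, (∀ y, f (-y) = f y) →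
      ∑ c, f (x c) = ∑ j ∈ Finset.range (J + 1), b j * f (8 * j) := by
  classical
  refine ⟨fun j => ∑ c, if (x c).natAbs = 8 * j then 1 else 0, fun j =>
    Finset.sum_nonneg fun c _ => by split_ifs <;> simp, ?_⟩
  intro f hf
  simp only [Finset.sum_mul]
  rw [Finset.sum_comm]
  refine Finset.sum_congr rfl fun c _ => ?_
  have h1 := hx8 c
  have h2 := hxJ c
  have habs : f (x c) = f ((x c).natAbs : ℤ) := by
    rcases Int.natAbs_eq (x c) with h | h
    · rw [← h]
    · conv_lhs => rw [h]
      exact hf _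
  rw [Finset.sum_eq_single ((x c).natAbs / 8)]
  · rw [if_pos (by omega), one_mul, habs]
    congr 1
    omega
  · intro j _ hj
    rw [if_neg (by omega), zero_mul]
  · intro h
    exact absurd (Finset.mem_range.2 (by omega)) h

lemma KP_2 (n x : ℤ) : KP n x 2 = x ^ 2 + ((-1) * n ^ 1) * x ^ 0 := by
  simp [KP]; ring

lemma KP_4 (n x : ℤ) : KP n x 4 = x ^ 4 + ((-6) * n ^ 1 + (3) * n ^ 2) * x ^ 0 + ((8) + (-6) * n ^ 1) * x ^ 2 := by
  simp [KP]; ring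

lemma KP_6 (n x : ℤ) : KP n x 6 = x ^ 6 + ((-120) * n ^ 1 + (90) * n ^ 2 + (-15) * n ^ 3) * x ^ 0 + ((184) + (-210) * n ^ 1 + (45) * n ^ 2) * x ^ 2 + ((40) + (-15) * n ^ 1) * x ^ 4 := by
  simp [KP]; ring

lemma KP_8 (n x : ℤ) : KP n x 8 = x ^ 8 + ((-5040) * n ^ 1 + (4620) * n ^ 2 + (-1260) * n ^ 3 + (105) * n ^ 4) * x ^ 0 + ((8448) + (-11872) * n ^ 1 + (4200) * n ^ 2 + (-420) * n ^ 3) * x ^ 2 + ((2464) + (-1540) * n ^ 1 + (210) * n ^ 2) * x ^ 4 + ((112) + (-28) * n ^ 1) * x ^ 6 := by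
  simp [KP]; ring

lemma KP_10 (n x : ℤ) : KP n x 10 = x ^ 10 + ((-362880) * n ^ 1 + (378000) * n ^ 2 + (-132300) * n ^ 3 + (18900) * n ^ 4 + (-945) * n ^ 5) * x ^ 0 + ((648576) + (-1040400) * n ^ 1 + (475020) * n ^ 2 + (-81900) * n ^ 3 + (4725) * n ^ 4) * x ^ 2 + ((229760) + (-186480) * n ^ 1 + (44100) * n ^ 2 + (-3150) * n ^ 3) * x ^ 4 + ((14448) + (-6300) * n ^ 1 + (630) * n ^ 2) * x ^ 6 + ((240) + (-45) * n ^ 1) * x ^ 8 := by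
  simp [KP]; ring

lemma KP_12 (n x : ℤ) : KP n x 12 = x ^ 12 + ((-39916800) * n ^ 1 + (45571680) * n ^ 2 + (-18711000) * n ^ 3 + (3534300) * n ^ 4 + (-311850) * n ^ 5 + (10395) * n ^ 6) * x ^ 0 + ((74972160) + (-132206976) * n ^ 1 + (71089920) * n ^ 2 + (-16271640) * n ^ 3 + (1663200) * n ^ 4 + (-62370) * n ^ 5) * x ^ 2 + ((30633856) + (-29412240) * n ^ 1 + (9272340) * n ^ 2 + (-1178100) * n ^ 3 + (51975) * n ^ 4) * x ^ 4 + ((2393600) + (-1397088) * n ^ 1 + (249480) * n ^ 2 + (-13860) * n ^ 3) * x ^ 6 + ((55968) + (-18810) * n ^ 1 + (1485) * n ^ 2) * x ^ 8 + ((440) + (-66) * n ^ 1) * x ^ 10 := by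
  simp [KP]; ring

/-- Scaled shadow multiplicity. -/
def E14_0 (n : ℤ) : ℤ := ((35624176739942400) + (-840280428357120) * n ^ 1 + (15270159782880) * n ^ 2 + (-180137363400) * n ^ 3 + (1328651100) * n ^ 4 + (-5607630) * n ^ 5 + (10395) * n ^ 6)

/-- Scaled shadow multiplicity. -/
def E14_1 (n : ℤ) : ℤ := ((-565352890099200) * n ^ 1 + (13155249754080) * n ^ 2 + (-168527104200) * n ^ 3 + (1289540700) * n ^ 4 + (-5547150) * n ^ 5 + (10395) * n ^ 6)

/-- Scaled shadow multiplicity. -/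
def E14_2 (n : ℤ) : ℤ := ((-144700303910400) * n ^ 1 + (8370288591840) * n ^ 2 + (-137774959560) * n ^ 3 + (1177370460) * n ^ 4 + (-5365710) * n ^ 5 + (10395) * n ^ 6)

/-- Scaled shadow multiplicity. -/
def E14_3 (n : ℤ) : ℤ := ((-64618838484480) * n ^ 1 + (4196558630880) * n ^ 2 + (-98701250760) * n ^ 3 + (1007623260) * n ^ 4 + (-5063310) * n ^ 5 + (10395) * n ^ 6)

/-- Scaled shadow multiplicity. -/
def E14_4 (n : ℤ) : ℤ := ((-36410254272000) * n ^ 1 + (2457468326880) * n ^ 2 + (-64621254600) * n ^ 3 + (806103900) * n ^ 4 + (-4639950) * n ^ 5 + (10395) * n ^ 6)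

/-- Scaled shadow multiplicity. -/
def E14_5 (n : ℤ) : ℤ := ((-23321166865920) * n ^ 1 + (1601860186080) * n ^ 2 + (-44267315400) * n ^ 3 + (608939100) * n ^ 4 + (-4095630) * n ^ 5 + (10395) * n ^ 6)

/-- Scaled shadow multiplicity. -/
def E14_6 (n : ℤ) : ℤ := ((-16202308953600) * n ^ 1 + (1123444032480) * n ^ 2 + (-31879801800) * n ^ 3 + (462577500) * n ^ 4 + (-3430350) * n ^ 5 + (10395) * n ^ 6)

/-- Scaled value of the sum of `KP n _ k`. -/
def V14 (n : ℤ) (k : ℕ) : ℤ :=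
  (462) * E14_0 n * KP n 0 k +
    (-792) * E14_1 n * KP n 8 k +
    (495) * E14_2 n * KP n 16 k +
    (-220) * E14_3 n * KP n 24 k +
    (66) * E14_4 n * KP n 32 k +
    (-12) * E14_5 n * KP n 40 k +
    (1) * E14_6 n * KP n 48 k

set_option maxHeartbeats 4000000 in
lemma mult14 (n N b0 b1 b2 b3 b4 b5 b6 : ℤ) (h0 : b0 + b1 + b2 + b3 + b4 + b5 + b6 = N)
    (h2 : b0 * KP n 0 2 + b1 * KP n 8 2 + b2 * KP n 16 2 + b3 * KP n 24 2 + b4 * KP n 32 2 + b5 * KP n 40 2 + b6 * KP n 48 2 = 0)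
    (h4 : b0 * KP n 0 4 + b1 * KP n 8 4 + b2 * KP n 16 4 + b3 * KP n 24 4 + b4 * KP n 32 4 + b5 * KP n 40 4 + b6 * KP n 48 4 = 0)
    (h6 : b0 * KP n 0 6 + b1 * KP n 8 6 + b2 * KP n 16 6 + b3 * KP n 24 6 + b4 * KP n 32 6 + b5 * KP n 40 6 + b6 * KP n 48 6 = 0)
    (h8 : b0 * KP n 0 8 + b1 * KP n 8 8 + b2 * KP n 16 8 + b3 * KP n 24 8 + b4 * KP n 32 8 + b5 * KP n 40 8 + b6 * KP n 48 8 = 0)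
    (h10 : b0 * KP n 0 10 + b1 * KP n 8 10 + b2 * KP n 16 10 + b3 * KP n 24 10 + b4 * KP n 32 10 + b5 * KP n 40 10 + b6 * KP n 48 10 = 0)
    (h12 : b0 * KP n 0 12 + b1 * KP n 8 12 + b2 * KP n 16 12 + b3 * KP n 24 12 + b4 * KP n 32 12 + b5 * KP n 40 12 + b6 * KP n 48 12 = 0) :
    (35624176739942400) * b0 = N * E14_0 n ∧ (-20780769764966400) * b1 = N * E14_1 n ∧ (33249231623946240) * b2 = N * E14_2 n ∧ (-74810771153879040) * b3 = N * E14_3 n ∧ (249369237179596800) * b4 = N * E14_4 n ∧ (-1371530804487782400) * b5 = N * E14_5 n ∧ (16458369653853388800) * b6 = N * E14_6 n := by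
  simp only [KP_2, KP_4, KP_6, KP_8, KP_10, KP_12] at *
  have m0 : b0 * 1 + b1 * 1 + b2 * 1 + b3 * 1 + b4 * 1 + b5 * 1 + b6 * 1 = N := by linear_combination h0
  have m1 : b0 * 0 + b1 * 64 + b2 * 256 + b3 * 576 + b4 * 1024 + b5 * 1600 + b6 * 2304 = N * ((1) * n ^ 1) := by
    linear_combination h2 - ((-1) * n ^ 1) * m0
  have m2 : b0 * 0 + b1 * 4096 + b2 * 65536 + b3 * 331776 + b4 * 1048576 + b5 * 2560000 + b6 * 5308416 = N * ((-2) * n ^ 1 + (3) * n ^ 2) := by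
    linear_combination h4 - ((-6) * n ^ 1 + (3) * n ^ 2) * m0 - ((8) + (-6) * n ^ 1) * m1
  have m3 : b0 * 0 + b1 * 262144 + b2 * 16777216 + b3 * 191102976 + b4 * 1073741824 + b5 * 4096000000 + b6 * 12230590464 = N * ((16) * n ^ 1 + (-30) * n ^ 2 + (15) * n ^ 3) := by
    linear_combination h6 - ((-120) * n ^ 1 + (90) * n ^ 2 + (-15) * n ^ 3) * m0 - ((184) + (-210) * n ^ 1 + (45) * n ^ 2) * m1 - ((40) + (-15) * n ^ 1) * m2
  have m4 : b0 * 0 + b1 * 16777216 + b2 * 4294967296 + b3 * 110075314176 + b4 * 1099511627776 + b5 * 6553600000000 + b6 * 28179280429056 = N * ((-272) * n ^ 1 + (588) * n ^ 2 + (-420) * n ^ 3 + (105) * n ^ 4) := by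
    linear_combination h8 - ((-5040) * n ^ 1 + (4620) * n ^ 2 + (-1260) * n ^ 3 + (105) * n ^ 4) * m0 - ((8448) + (-11872) * n ^ 1 + (4200) * n ^ 2 + (-420) * n ^ 3) * m1 - ((2464) + (-1540) * n ^ 1 + (210) * n ^ 2) * m2 - ((112) + (-28) * n ^ 1) * m3
  have m5 : b0 * 0 + b1 * 1073741824 + b2 * 1099511627776 + b3 * 63403380965376 + b4 * 1125899906842624 + b5 * 10485760000000000 + b6 * 64925062108545024 = N * ((7936) * n ^ 1 + (-18960) * n ^ 2 + (16380) * n ^ 3 + (-6300) * n ^ 4 + (945) * n ^ 5) := by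
    linear_combination h10 - ((-362880) * n ^ 1 + (378000) * n ^ 2 + (-132300) * n ^ 3 + (18900) * n ^ 4 + (-945) * n ^ 5) * m0 - ((648576) + (-1040400) * n ^ 1 + (475020) * n ^ 2 + (-81900) * n ^ 3 + (4725) * n ^ 4) * m1 - ((229760) + (-186480) * n ^ 1 + (44100) * n ^ 2 + (-3150) * n ^ 3) * m2 - ((14448) + (-6300) * n ^ 1 + (630) * n ^ 2) * m3 - ((240) + (-45) * n ^ 1) * m4
  have m6 : b0 * 0 + b1 * 68719476736 + b2 * 281474976710656 + b3 * 36520347436056576 + b4 * 1152921504606846976 + b5 * 16777216000000000000 + b6 * 149587343098087735296 = N * ((-353792) * n ^ 1 + (911328) * n ^ 2 + (-893640) * n ^ 3 + (429660) * n ^ 4 + (-103950) * n ^ 5 + (10395) * n ^ 6) := by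
    linear_combination h12 - ((-39916800) * n ^ 1 + (45571680) * n ^ 2 + (-18711000) * n ^ 3 + (3534300) * n ^ 4 + (-311850) * n ^ 5 + (10395) * n ^ 6) * m0 - ((74972160) + (-132206976) * n ^ 1 + (71089920) * n ^ 2 + (-16271640) * n ^ 3 + (1663200) * n ^ 4 + (-62370) * n ^ 5) * m1 - ((30633856) + (-29412240) * n ^ 1 + (9272340) * n ^ 2 + (-1178100) * n ^ 3 + (51975) * n ^ 4) * m2 - ((2393600) + (-1397088) * n ^ 1 + (249480) * n ^ 2 + (-13860) * n ^ 3) * m3 - ((55968) + (-18810) * n ^ 1 + (1485) * n ^ 2) * m4 - ((440) + (-66) * n ^ 1) * m5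
  refine ⟨?_, ?_, ?_, ?_, ?_, ?_, ?_⟩
  · unfold E14_0
    linear_combination (35624176739942400) * m0 + (-830148458840064) * m1 + (4971021991936) * m2 + (-11658330112) * m3 + (12300288) * m4 + (-5824) * m5 + (1) * m6
  · unfold E14_1
    linear_combination (0) * m0 + (-556627761561600) * m1 + (4273760894976) * m2 + (-10894704640) * m3 + (11931648) * m4 + (-5760) * m5 + (1) * m6
  · unfold E14_2
    linear_combination (0) * m0 + (-139156940390400) * m1 + (2699185618944) * m2 + (-8874360832) * m3 + (10874880) * m4 + (-5568) * m5 + (1) * m6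
  · unfold E14_3
    linear_combination (0) * m0 + (-61847529062400) * m1 + (1333855780864) * m2 + (-6314524672) * m3 + (9277440) * m4 + (-5248) * m5 + (1) * m6
  · unfold E14_4
    linear_combination (0) * m0 + (-34789235097600) * m1 + (776717991936) * m2 + (-4096000000) * m3 + (7385088) * m4 + (-4800) * m5 + (1) * m6
  · unfold E14_5
    linear_combination (0) * m0 + (-22265110462464) * m1 + (504927092736) * m2 + (-2791309312) * m3 + (5541888) * m4 + (-4224) * m5 + (1) * m6
  · unfold E14_6
    linear_combination (0) * m0 + (-15461882265600) * m1 + (353596604416) * m2 + (-2004090880) * m3 + (4190208) * m4 + (-3520) * m5 + (1) * m6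










/-- Scaled shadow multiplicity. -/
def E10_0 (n : ℤ) : ℤ := ((9663676416) + (-217225488) * n ^ 1 + (3412812) * n ^ 2 + (-29220) * n ^ 3 + (105) * n ^ 4)

/-- Scaled shadow multiplicity. -/
def E10_1 (n : ℤ) : ℤ := ((-153023760) * n ^ 1 + (3054540) * n ^ 2 + (-28260) * n ^ 3 + (105) * n ^ 4)

/-- Scaled shadow multiplicity. -/
def E10_2 (n : ℤ) : ℤ := ((-39160080) * n ^ 1 + (2127180) * n ^ 2 + (-25380) * n ^ 3 + (105) * n ^ 4)

/-- Scaled shadow multiplicity. -/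
def E10_3 (n : ℤ) : ℤ := ((-17487120) * n ^ 1 + (1073100) * n ^ 2 + (-20580) * n ^ 3 + (105) * n ^ 4)

/-- Scaled shadow multiplicity. -/
def E10_4 (n : ℤ) : ℤ := ((-9853200) * n ^ 1 + (629580) * n ^ 2 + (-13860) * n ^ 3 + (105) * n ^ 4)

/-- Scaled value of the sum of `KP n _ k`. -/
def V10 (n : ℤ) (k : ℕ) : ℤ :=
  (35) * E10_0 n * KP n 0 k +
    (-56) * E10_1 n * KP n 8 k +
    (28) * E10_2 n * KP n 16 k +
    (-8) * E10_3 n * KP n 24 k +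
    (1) * E10_4 n * KP n 32 k

set_option maxHeartbeats 4000000 in
lemma mult10 (n N b0 b1 b2 b3 b4 : ℤ) (h0 : b0 + b1 + b2 + b3 + b4 = N)
    (h2 : b0 * KP n 0 2 + b1 * KP n 8 2 + b2 * KP n 16 2 + b3 * KP n 24 2 + b4 * KP n 32 2 = 0)
    (h4 : b0 * KP n 0 4 + b1 * KP n 8 4 + b2 * KP n 16 4 + b3 * KP n 24 4 + b4 * KP n 32 4 = 0)
    (h6 : b0 * KP n 0 6 + b1 * KP n 8 6 + b2 * KP n 16 6 + b3 * KP n 24 6 + b4 * KP n 32 6 = 0)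
    (h8 : b0 * KP n 0 8 + b1 * KP n 8 8 + b2 * KP n 16 8 + b3 * KP n 24 8 + b4 * KP n 32 8 = 0) :
    (9663676416) * b0 = N * E10_0 n ∧ (-6039797760) * b1 = N * E10_1 n ∧ (12079595520) * b2 = N * E10_2 n ∧ (-42278584320) * b3 = N * E10_3 n ∧ (338228674560) * b4 = N * E10_4 n := by
  simp only [KP_2, KP_4, KP_6, KP_8] at *
  have m0 : b0 * 1 + b1 * 1 + b2 * 1 + b3 * 1 + b4 * 1 = N := by linear_combination h0
  have m1 : b0 * 0 + b1 * 64 + b2 * 256 + b3 * 576 + b4 * 1024 = N * ((1) * n ^ 1) := by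
    linear_combination h2 - ((-1) * n ^ 1) * m0
  have m2 : b0 * 0 + b1 * 4096 + b2 * 65536 + b3 * 331776 + b4 * 1048576 = N * ((-2) * n ^ 1 + (3) * n ^ 2) := by
    linear_combination h4 - ((-6) * n ^ 1 + (3) * n ^ 2) * m0 - ((8) + (-6) * n ^ 1) * m1
  have m3 : b0 * 0 + b1 * 262144 + b2 * 16777216 + b3 * 191102976 + b4 * 1073741824 = N * ((16) * n ^ 1 + (-30) * n ^ 2 + (15) * n ^ 3) := by
    linear_combination h6 - ((-120) * n ^ 1 + (90) * n ^ 2 + (-15) * n ^ 3) * m0 - ((184) + (-210) * n ^ 1 + (45) * n ^ 2) * m1 - ((40) + (-15) * n ^ 1) * m2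
  have m4 : b0 * 0 + b1 * 16777216 + b2 * 4294967296 + b3 * 110075314176 + b4 * 1099511627776 = N * ((-272) * n ^ 1 + (588) * n ^ 2 + (-420) * n ^ 3 + (105) * n ^ 4) := by
    linear_combination h8 - ((-5040) * n ^ 1 + (4620) * n ^ 2 + (-1260) * n ^ 3 + (105) * n ^ 4) * m0 - ((8448) + (-11872) * n ^ 1 + (4200) * n ^ 2 + (-420) * n ^ 3) * m1 - ((2464) + (-1540) * n ^ 1 + (210) * n ^ 2) * m2 - ((112) + (-28) * n ^ 1) * m3
  refine ⟨?_, ?_, ?_, ?_, ?_⟩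
  · unfold E10_0
    linear_combination (9663676416) * m0 + (-214958080) * m1 + (1118208) * m2 + (-1920) * m3 + (1) * m4
  · unfold E10_1
    linear_combination (0) * m0 + (-150994944) * m1 + (999424) * m2 + (-1856) * m3 + (1) * m4
  · unfold E10_2
    linear_combination (0) * m0 + (-37748736) * m1 + (692224) * m2 + (-1664) * m3 + (1) * m4
  · unfold E10_3
    linear_combination (0) * m0 + (-16777216) * m1 + (344064) * m2 + (-1344) * m3 + (1) * m4
  · unfold E10_4
    linear_combination (0) * m0 + (-9437184) * m1 + (200704) * m2 + (-896) * m3 + (1) * m4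









lemma chk14_20 : ∀ m < 5, V14 (96 + 2 * ((m : ℕ) : ℤ)) 20 < 0 := by
  decide +kernel

lemma chk14_22 : ∀ m < 4, 0 < V14 (106 + 2 * ((m : ℕ) : ℤ)) 22 := by
  decide +kernel

lemma chk14_24 : ∀ m < 4, V14 (114 + 2 * ((m : ℕ) : ℤ)) 24 < 0 := by
  decide +kernel

lemma chk14_26 : ∀ m < 4, 0 < V14 (122 + 2 * ((m : ℕ) : ℤ)) 26 := by
  decide +kernel

lemma chk14_28 : ∀ m < 4, V14 (130 + 2 * ((m : ℕ) : ℤ)) 28 < 0 := by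
  decide +kernel

lemma chk14_30 : ∀ m < 3, 0 < V14 (138 + 2 * ((m : ℕ) : ℤ)) 30 := by
  decide +kernel

lemma chk14_32 : ∀ m < 4, V14 (144 + 2 * ((m : ℕ) : ℤ)) 32 < 0 := by
  decide +kernel

lemma chk14_34 : ∀ m < 3, 0 < V14 (152 + 2 * ((m : ℕ) : ℤ)) 34 := by
  decide +kernel

lemma chk14_36 : ∀ m < 2, V14 (158 + 2 * ((m : ℕ) : ℤ)) 36 < 0 := by
  decide +kernel

lemma final14 {n : ℕ} (C : Submodule (ZMod 2) (Fin n → ZMod 2))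
    (hE : IsSExtremal C) (hd : minWt C = 14) : 70 ≤ n ∧ n ≤ 94 := by
  classical
  haveI : Fintype C := Fintype.ofFinite _
  obtain ⟨hn, hlo, x, h8, hb, hz, hp, hm⟩ := core C 14 hE hd
  obtain ⟨b, hb0, hsum⟩ := sum_even 6 x
    (fun c => by have := h8 c; push_cast at this; omega)
    (fun c => by have := hb c; push_cast at this ⊢; omega)
  have hK : ∀ k, k % 2 = 0 → ∑ c, KP n (x c) k =
      b 0 * KP n 0 k + b 1 * KP n 8 k + b 2 * KP n 16 k + b 3 * KP n 24 k + b 4 * KP n 32 k + b 5 * KP n 40 k + b 6 * KP n 48 k := by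
    intro k hk
    have h := hsum (fun y => KP n y k) (fun y => by
      simp only [KP_even n y k, (Nat.even_iff.2 hk).neg_one_pow, one_mul])
    simpa [Finset.sum_range_succ] using h
  have hN : (0 : ℤ) < Fintype.card C := by exact_mod_cast Fintype.card_pos
  have hc : b 0 + b 1 + b 2 + b 3 + b 4 + b 5 + b 6 = (Fintype.card C : ℤ) := by
    have h := hK 0 (by decide)
    simp only [KP, mul_one, Finset.sum_const, Finset.card_univ, nsmul_eq_mul] at h
    exact h.symm
  obtain ⟨H0, H1, H2, H3, H4, H5, H6⟩ := mult14 n (Fintype.card C) (b 0) (b 1) (b 2) (b 3) (b 4) (b 5) (b 6) hc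
    ((hK 2 (by decide)).symm.trans (hz 2 (by decide) (by decide))) ((hK 4 (by decide)).symm.trans (hz 4 (by decide) (by decide))) ((hK 6 (by decide)).symm.trans (hz 6 (by decide) (by decide))) ((hK 8 (by decide)).symm.trans (hz 8 (by decide) (by decide))) ((hK 10 (by decide)).symm.trans (hz 10 (by decide) (by decide))) ((hK 12 (by decide)).symm.trans (hz 12 (by decide) (by decide)))
  have hV : ∀ k, k % 2 = 0 → 16458369653853388800 * ∑ c, KP n (x c) k = Fintype.card C * V14 n k := by
    intro k hk
    rw [hK k hk, V14]
    linear_combination (462) * KP n 0 k * H0 + (-792) * KP n 8 k * H1 + (495) * KP n 16 k * H2 + (-220) * KP n 24 k * H3 + (66) * KP n 32 k * H4 + (-12) * KP n 40 k * H5 + (1) * KP n 48 k * H6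
  generalize (Fintype.card C : ℤ) = N at *
  have hneg : ∀ k, k % 4 = 0 → V14 n k < 0 → False := by
    intro k hk h
    have h1 := hV k (by omega)
    have h2 := hp k hk
    nlinarith [mul_pos hN (neg_pos.2 h)]
  have hpos : ∀ k, k % 4 = 2 → 0 < V14 n k → False := by
    intro k hk h
    have h1 := hV k (by omega)
    have h2 := hm k hk
    nlinarith [mul_pos hN h]
  constructor
  · by_contra hlt
    have hE : E14_6 n < 0 := by
      have h1 : 48 ≤ n := by omega
      have h2 : n < 70 := by omega
      clear * - h1 h2 hn
      interval_cases n <;> first | omega | (unfold E14_6; norm_num)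
    have := hb0 6
    nlinarith [mul_pos hN (neg_pos.2 hE)]
  · by_contra hgt
    obtain ⟨p, rfl⟩ := hn
    by_cases hbig : 162 ≤ 2 * p
    · have hE : 0 < E14_5 ((2 * p : ℕ) : ℤ) := by
        obtain ⟨m, hm⟩ := Nat.exists_eq_add_of_le hbig
        rw [hm]
        push_cast
        have e : E14_5 (162 + (m : ℤ)) = 378964031846400 * (m : ℤ) ^ 0 + 220902217683840 * (m : ℤ) ^ 1 + 9240034668480 * (m : ℤ) ^ 2 + 159360755400 * (m : ℤ) ^ 3 + 1383574500 * (m : ℤ) ^ 4 + 6008310 * (m : ℤ) ^ 5 + 10395 * (m : ℤ) ^ 6 := by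
          unfold E14_5; ring
        rw [e]
        positivity
      have := hb0 5
      nlinarith [mul_pos hN hE]
    by_cases h20 : 2 * p ≤ 104
    · refine hneg 20 (by decide) ?_
      have h := chk14_20 (p - 48) (by omega)
      rwa [show (96 + 2 * ((p - 48 : ℕ) : ℤ)) = ((2 * p : ℕ) : ℤ) by omega] at h
    by_cases h22 : 2 * p ≤ 112
    · refine hpos 22 (by decide) ?_
      have h := chk14_22 (p - 53) (by omega)
      rwa [show (106 + 2 * ((p - 53 : ℕ) : ℤ)) = ((2 * p : ℕ) : ℤ) by omega] at h
    by_cases h24 : 2 * p ≤ 120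
    · refine hneg 24 (by decide) ?_
      have h := chk14_24 (p - 57) (by omega)
      rwa [show (114 + 2 * ((p - 57 : ℕ) : ℤ)) = ((2 * p : ℕ) : ℤ) by omega] at h
    by_cases h26 : 2 * p ≤ 128
    · refine hpos 26 (by decide) ?_
      have h := chk14_26 (p - 61) (by omega)
      rwa [show (122 + 2 * ((p - 61 : ℕ) : ℤ)) = ((2 * p : ℕ) : ℤ) by omega] at h
    by_cases h28 : 2 * p ≤ 136
    · refine hneg 28 (by decide) ?_
      have h := chk14_28 (p - 65) (by omega)
      rwa [show (130 + 2 * ((p - 65 : ℕ) : ℤ)) = ((2 * p : ℕ) : ℤ) by omega] at h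
    by_cases h30 : 2 * p ≤ 142
    · refine hpos 30 (by decide) ?_
      have h := chk14_30 (p - 69) (by omega)
      rwa [show (138 + 2 * ((p - 69 : ℕ) : ℤ)) = ((2 * p : ℕ) : ℤ) by omega] at h
    by_cases h32 : 2 * p ≤ 150
    · refine hneg 32 (by decide) ?_
      have h := chk14_32 (p - 72) (by omega)
      rwa [show (144 + 2 * ((p - 72 : ℕ) : ℤ)) = ((2 * p : ℕ) : ℤ) by omega] at h
    by_cases h34 : 2 * p ≤ 156
    · refine hpos 34 (by decide) ?_
      have h := chk14_34 (p - 76) (by omega)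
      rwa [show (152 + 2 * ((p - 76 : ℕ) : ℤ)) = ((2 * p : ℕ) : ℤ) by omega] at h
    by_cases h36 : 2 * p ≤ 160
    · refine hneg 36 (by decide) ?_
      have h := chk14_36 (p - 79) (by omega)
      rwa [show (158 + 2 * ((p - 79 : ℕ) : ℤ)) = ((2 * p : ℕ) : ℤ) by omega] at h
    omega

lemma chk10_16 : ∀ m < 3, V10 (72 + 2 * ((m : ℕ) : ℤ)) 16 < 0 := by
  decide +kernel

lemma chk10_18 : ∀ m < 4, 0 < V10 (78 + 2 * ((m : ℕ) : ℤ)) 18 := by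
  decide +kernel

lemma chk10_20 : ∀ m < 4, V10 (86 + 2 * ((m : ℕ) : ℤ)) 20 < 0 := by
  decide +kernel

lemma chk10_22 : ∀ m < 3, 0 < V10 (94 + 2 * ((m : ℕ) : ℤ)) 22 := by
  decide +kernel

lemma chk10_24 : ∀ m < 4, V10 (100 + 2 * ((m : ℕ) : ℤ)) 24 < 0 := by
  decide +kernel

lemma chk10_26 : ∀ m < 3, 0 < V10 (108 + 2 * ((m : ℕ) : ℤ)) 26 := by
  decide +kernel

lemma chk10_28 : ∀ m < 3, V10 (114 + 2 * ((m : ℕ) : ℤ)) 28 < 0 := by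
  decide +kernel

lemma chk10_30 : ∀ m < 3, 0 < V10 (120 + 2 * ((m : ℕ) : ℤ)) 30 := by
  decide +kernel

lemma final10 {n : ℕ} (C : Submodule (ZMod 2) (Fin n → ZMod 2))
    (hE : IsSExtremal C) (hd : minWt C = 10) : 46 ≤ n ∧ n ≤ 70 := by
  classical
  haveI : Fintype C := Fintype.ofFinite _
  obtain ⟨hn, hlo, x, h8, hb, hz, hp, hm⟩ := core C 10 hE hd
  obtain ⟨b, hb0, hsum⟩ := sum_even 4 x
    (fun c => by have := h8 c; push_cast at this; omega)
    (fun c => by have := hb c; push_cast at this ⊢; omega)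
  have hK : ∀ k, k % 2 = 0 → ∑ c, KP n (x c) k =
      b 0 * KP n 0 k + b 1 * KP n 8 k + b 2 * KP n 16 k + b 3 * KP n 24 k + b 4 * KP n 32 k := by
    intro k hk
    have h := hsum (fun y => KP n y k) (fun y => by
      simp only [KP_even n y k, (Nat.even_iff.2 hk).neg_one_pow, one_mul])
    simpa [Finset.sum_range_succ] using h
  have hN : (0 : ℤ) < Fintype.card C := by exact_mod_cast Fintype.card_pos
  have hc : b 0 + b 1 + b 2 + b 3 + b 4 = (Fintype.card C : ℤ) := by
    have h := hK 0 (by decide)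
    simp only [KP, mul_one, Finset.sum_const, Finset.card_univ, nsmul_eq_mul] at h
    exact h.symm
  obtain ⟨H0, H1, H2, H3, H4⟩ := mult10 n (Fintype.card C) (b 0) (b 1) (b 2) (b 3) (b 4) hc
    ((hK 2 (by decide)).symm.trans (hz 2 (by decide) (by decide))) ((hK 4 (by decide)).symm.trans (hz 4 (by decide) (by decide))) ((hK 6 (by decide)).symm.trans (hz 6 (by decide) (by decide))) ((hK 8 (by decide)).symm.trans (hz 8 (by decide) (by decide)))
  have hV : ∀ k, k % 2 = 0 → 338228674560 * ∑ c, KP n (x c) k = Fintype.card C * V10 n k := by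
    intro k hk
    rw [hK k hk, V10]
    linear_combination (35) * KP n 0 k * H0 + (-56) * KP n 8 k * H1 + (28) * KP n 16 k * H2 + (-8) * KP n 24 k * H3 + (1) * KP n 32 k * H4
  generalize (Fintype.card C : ℤ) = N at *
  have hneg : ∀ k, k % 4 = 0 → V10 n k < 0 → False := by
    intro k hk h
    have h1 := hV k (by omega)
    have h2 := hp k hk
    nlinarith [mul_pos hN (neg_pos.2 h)]
  have hpos : ∀ k, k % 4 = 2 → 0 < V10 n k → False := by
    intro k hk h
    have h1 := hV k (by omega)
    have h2 := hm k hk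
    nlinarith [mul_pos hN h]
  constructor
  · by_contra hlt
    have hE : E10_4 n < 0 := by
      have h1 : 32 ≤ n := by omega
      have h2 : n < 46 := by omega
      clear * - h1 h2 hn
      interval_cases n <;> first | omega | (unfold E10_4; norm_num)
    have := hb0 4
    nlinarith [mul_pos hN (neg_pos.2 hE)]
  · by_contra hgt
    obtain ⟨p, rfl⟩ := hn
    by_cases hbig : 126 ≤ 2 * p
    · have hE : 0 < E10_3 ((2 * p : ℕ) : ℤ) := by
        obtain ⟨m, hm⟩ := Nat.exists_eq_add_of_le hbig
        rw [hm]
        push_cast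
        have e : E10_3 (126 + (m : ℤ)) = 130394880 * (m : ℤ) ^ 0 + 112907760 * (m : ℤ) ^ 1 + 3295740 * (m : ℤ) ^ 2 + 32340 * (m : ℤ) ^ 3 + 105 * (m : ℤ) ^ 4 := by
          unfold E10_3; ring
        rw [e]
        positivity
      have := hb0 3
      nlinarith [mul_pos hN hE]
    by_cases h16 : 2 * p ≤ 76
    · refine hneg 16 (by decide) ?_
      have h := chk10_16 (p - 36) (by omega)
      rwa [show (72 + 2 * ((p - 36 : ℕ) : ℤ)) = ((2 * p : ℕ) : ℤ) by omega] at h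
    by_cases h18 : 2 * p ≤ 84
    · refine hpos 18 (by decide) ?_
      have h := chk10_18 (p - 39) (by omega)
      rwa [show (78 + 2 * ((p - 39 : ℕ) : ℤ)) = ((2 * p : ℕ) : ℤ) by omega] at h
    by_cases h20 : 2 * p ≤ 92
    · refine hneg 20 (by decide) ?_
      have h := chk10_20 (p - 43) (by omega)
      rwa [show (86 + 2 * ((p - 43 : ℕ) : ℤ)) = ((2 * p : ℕ) : ℤ) by omega] at h
    by_cases h22 : 2 * p ≤ 98
    · refine hpos 22 (by decide) ?_
      have h := chk10_22 (p - 47) (by omega)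
      rwa [show (94 + 2 * ((p - 47 : ℕ) : ℤ)) = ((2 * p : ℕ) : ℤ) by omega] at h
    by_cases h24 : 2 * p ≤ 106
    · refine hneg 24 (by decide) ?_
      have h := chk10_24 (p - 50) (by omega)
      rwa [show (100 + 2 * ((p - 50 : ℕ) : ℤ)) = ((2 * p : ℕ) : ℤ) by omega] at h
    by_cases h26 : 2 * p ≤ 112
    · refine hpos 26 (by decide) ?_
      have h := chk10_26 (p - 54) (by omega)
      rwa [show (108 + 2 * ((p - 54 : ℕ) : ℤ)) = ((2 * p : ℕ) : ℤ) by omega] at h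
    by_cases h28 : 2 * p ≤ 118
    · refine hneg 28 (by decide) ?_
      have h := chk10_28 (p - 57) (by omega)
      rwa [show (114 + 2 * ((p - 57 : ℕ) : ℤ)) = ((2 * p : ℕ) : ℤ) by omega] at h
    by_cases h30 : 2 * p ≤ 124
    · refine hpos 30 (by decide) ?_
      have h := chk10_30 (p - 60) (by omega)
      rwa [show (120 + 2 * ((p - 60 : ℕ) : ℤ)) = ((2 * p : ℕ) : ℤ) by omega] at h
    omega

/-- If there exists an s-extremal singly even self-dual `[n, n/2, 10]` code then
`46 ≤ n ≤ 70`, and if there exists an s-extremal singly even self-dual `[n, n/2, 14]`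
code then `70 ≤ n ≤ 94`. -/
theorem sExtremal_length_range_10_14 (n : ℕ) :
    ((∃ C : Submodule (ZMod 2) (Fin n → ZMod 2),
        IsSExtremal C ∧ Module.finrank (ZMod 2) C = n / 2 ∧ minWt C = 10) →
      46 ≤ n ∧ n ≤ 70) ∧
    ((∃ C : Submodule (ZMod 2) (Fin n → ZMod 2),
        IsSExtremal C ∧ Module.finrank (ZMod 2) C = n / 2 ∧ minWt C = 14) →
      70 ≤ n ∧ n ≤ 94) := by
  exact ⟨fun ⟨C, hE, _, hd⟩ => final10 C hE hd, fun ⟨C, hE, _, hd⟩ => final14 C hE hd⟩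
end
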